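/- arXiv:2402.09829 — 2 statements merged into one kernel-verified Lean document; each statement's English description precedes it below -/
import Mathlib

section
/- Fix c with 1/2 ≤ c < 1. Then Σ_{h < x^{1−c}, h even} (1/h)·∏_{p | h, p > 2}(1 + 1/(p − 2)) · (log(x/h))^{−2} = (1 + o(1))·(1/𝔖)·(1/(2c) − 1/2)·(log x)^{−1} as x → ∞; that is, for every ε > 0 there is x₀ such that the sum differs from (1/𝔖)(1/(2c) − 1/2)(log x)^{−1} by at most ε·(log x)^{−1} for all x ≥ x₀. -/
open Real Finset

attribute [local instance] Classical.propDecidable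

/-- The twin-prime constant `𝔖 = ∏_{p > 2 prime} (1 − 1/(p−1)²)`. -/
noncomputable def twinConst : ℝ :=
  ∏' p : Nat.Primes, if 2 < (p : ℕ) then 1 - 1 / ((p : ℕ) - 1 : ℝ) ^ 2 else 1

/-!
Write `∏_{p ∣ h, p > 2} (1 + 1/(p-2)) = ∑_{D ∣ h} b(D)` with `D` ranging over the odd squarefree
numbers and `b(D) = ∏_{p ∣ D} 1/(p-2)`. Exchanging the sums leaves, for each `q = 2D`,
`b(D)/q` times the sum of `1/(k log²(x/(qk)))` over `k < x^{1-c}/q`. The summand is the derivative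
in `k` of `1/log(x/(qk))`, so comparison with the integral gives
`1/(c log x) - 1/log x + o(1/log x)` for fixed `q` and `O(1/log x)` uniformly in `q`. Since
`∑_D b(D)/D` converges, dominated convergence applies, and the Euler product of this series is
`∏_{p > 2} (1 + 1/(p(p-2))) = 1/𝔖`.
-/

open Filter Topology

lemma sum_Ico_ceil_filter_dvd {M : Type*} [AddCommMonoid M] (f : ℕ → M) (y : ℝ) {q : ℕ}
    (hq : 0 < q) :
    ∑ h ∈ (Ico 1 ⌈y⌉₊).filter (q ∣ ·), f h = ∑ k ∈ Ico 1 ⌈y / q⌉₊, f (q * k) := by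
  have hq' : (0 : ℝ) < q := by exact_mod_cast hq
  have hlt (k : ℕ) : k < ⌈y / q⌉₊ ↔ q * k < ⌈y⌉₊ := by
    rw [Nat.lt_ceil, Nat.lt_ceil, lt_div_iff₀' hq', Nat.cast_mul]
  symm
  refine Finset.sum_bij (fun k _ => q * k) ?_ ?_ ?_ fun _ _ => rfl
  · intro k hk
    obtain ⟨hk1, hk2⟩ := Finset.mem_Ico.mp hk
    exact Finset.mem_filter.mpr
      ⟨Finset.mem_Ico.mpr ⟨Nat.mul_pos hq hk1, (hlt k).mp hk2⟩, dvd_mul_right q k⟩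
  · exact fun k _ l _ h => Nat.eq_of_mul_eq_mul_left hq h
  · intro h hh
    obtain ⟨hmem, k, rfl⟩ := Finset.mem_filter.mp hh
    obtain ⟨h1, h2⟩ := Finset.mem_Ico.mp hmem
    exact ⟨k, Finset.mem_Ico.mpr ⟨Nat.pos_of_mul_pos_left h1, (hlt k).mpr h2⟩, rfl⟩

lemma hasSum_mul_sum_filter_dvd {ι R : Type*} [Semiring R] [TopologicalSpace R]
    [IsTopologicalSemiring R] {a : ι → R} {d : ι → ℕ} {w : ℕ → R} {T : Finset ℕ}
    (hw : ∀ h ∈ T, HasSum (fun i => if d i ∣ h then a i else 0) (w h)) (f : ℕ → R) :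
    HasSum (fun i => a i * ∑ h ∈ T.filter (d i ∣ ·), f h) (∑ h ∈ T, w h * f h) := by
  refine (hasSum_sum fun h hh => (hw h hh).mul_right (f h)).congr_fun fun i => ?_
  rw [Finset.mul_sum, Finset.sum_filter]
  simp only [ite_mul, zero_mul]

lemma eventually_abs_sub_le_of_tendsto_mul {α : Type*} {l : Filter α} {f g : α → ℝ} {A ε : ℝ}
    (hg : ∀ᶠ x in l, 0 < g x) (h : Tendsto (fun x => g x * f x) l (𝓝 A)) (hε : 0 < ε) :
    ∀ᶠ x in l, |f x - A * (g x)⁻¹| ≤ ε * (g x)⁻¹ := by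
  filter_upwards [hg, Metric.tendsto_nhds.mp h ε hε] with x hgx hx
  have hfactor : f x - A * (g x)⁻¹ = (g x * f x - A) * (g x)⁻¹ := by field_simp
  rw [hfactor, abs_mul, abs_of_pos (inv_pos.mpr hgx)]
  gcongr
  exact hx.le

/-- The summand `1 / (t log² (x / t))`, as a function of a real variable `t` so that it can be
compared with the derivative of `1 / log (x / t)`. -/
noncomputable def logWeight (x t : ℝ) : ℝ := 1 / t * Real.log (x / t) ^ (-2 : ℤ)

lemma logWeight_eq_inv (x t : ℝ) : logWeight x t = (t * Real.log (x / t) ^ 2)⁻¹ := by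
  rw [logWeight, zpow_neg, one_div, mul_inv]
  norm_cast

lemma logWeight_one (x : ℝ) : logWeight x 1 = (Real.log x ^ 2)⁻¹ := by
  rw [logWeight_eq_inv, one_mul, div_one]

lemma logWeight_mul (x q t : ℝ) : logWeight x (q * t) = q⁻¹ * logWeight (x / q) t := by
  simp only [logWeight_eq_inv, mul_inv, div_div, mul_assoc]

lemma logWeight_nonneg (x : ℝ) {t : ℝ} (ht : 0 ≤ t) : 0 ≤ logWeight x t := by
  rw [logWeight_eq_inv]
  positivity

lemma hasDerivAt_log_div {x t : ℝ} (hx : x ≠ 0) (ht : t ≠ 0) :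
    HasDerivAt (fun s => Real.log (x / s)) (-t⁻¹) t := by
  simp only [div_eq_mul_inv]
  refine (((hasDerivAt_inv ht).const_mul x).log (mul_ne_zero hx (inv_ne_zero ht))).congr_deriv ?_
  field_simp

lemma hasDerivAt_inv_log_div {x t : ℝ} (hx : x ≠ 0) (ht : t ≠ 0) (hlog : Real.log (x / t) ≠ 0) :
    HasDerivAt (fun s => (Real.log (x / s))⁻¹) (logWeight x t) t := by
  refine ((hasDerivAt_log_div hx ht).fun_inv hlog).congr_deriv ?_
  rw [logWeight_eq_inv]
  field_simp

lemma le_div_exp_two_iff {x t : ℝ} (hx : 0 < x) (ht : 0 < t) :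
    t ≤ x / Real.exp 2 ↔ 2 ≤ Real.log (x / t) := by
  rw [Real.le_log_iff_exp_le (div_pos hx ht), le_div_comm₀ ht (Real.exp_pos 2)]

lemma pos_of_mem_Ioc_div_exp_two {x t : ℝ} (ht : t ∈ Set.Ioc 0 (x / Real.exp 2)) : 0 < x :=
  (div_pos_iff_of_pos_right (Real.exp_pos 2)).mp (ht.1.trans_le ht.2)

lemma two_le_log_div_of_mem_Ioc {x t : ℝ} (ht : t ∈ Set.Ioc 0 (x / Real.exp 2)) :
    2 ≤ Real.log (x / t) :=
  (le_div_exp_two_iff (pos_of_mem_Ioc_div_exp_two ht) ht.1).mp ht.2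

lemma monotoneOn_mul_log_div_sq (x : ℝ) :
    MonotoneOn (fun t => t * Real.log (x / t) ^ 2) (Set.Ioc 0 (x / Real.exp 2)) := by
  have hderiv (t : ℝ) (ht : t ∈ Set.Ioc 0 (x / Real.exp 2)) :
      HasDerivAt (fun s => s * Real.log (x / s) ^ 2)
        (Real.log (x / t) * (Real.log (x / t) - 2)) t := by
    have ht0 : t ≠ 0 := ht.1.ne'
    have hx : x ≠ 0 := (pos_of_mem_Ioc_div_exp_two ht).ne'
    refine ((hasDerivAt_id t).mul ((hasDerivAt_log_div hx ht0).pow 2)).congr_deriv ?_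
    simp only [id_eq, Pi.pow_apply]
    field_simp
    ring
  refine monotoneOn_of_deriv_nonneg (convex_Ioc _ _)
    (fun t ht => (hderiv t ht).continuousAt.continuousWithinAt)
    (fun t ht => (hderiv t (interior_subset ht)).differentiableAt.differentiableWithinAt)
    fun t ht => ?_
  have hlog := two_le_log_div_of_mem_Ioc (interior_subset ht)
  rw [(hderiv t (interior_subset ht)).deriv]
  exact mul_nonneg (by linarith) (by linarith)

lemma antitoneOn_logWeight (x : ℝ) :
    AntitoneOn (logWeight x) (Set.Ioc 0 (x / Real.exp 2)) := by
  intro s hs t ht hst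
  have hlog := two_le_log_div_of_mem_Ioc hs
  have hs0 := hs.1
  rw [logWeight_eq_inv, logWeight_eq_inv]
  exact inv_anti₀ (by positivity) (monotoneOn_mul_log_div_sq x hs ht hst)

lemma integral_logWeight {x a b : ℝ} (ha : 0 < a) (hab : a ≤ b) (hb : b ≤ x / Real.exp 2) :
    ∫ t in a..b, logWeight x t = (Real.log (x / b))⁻¹ - (Real.log (x / a))⁻¹ := by
  have hsub : Set.uIcc a b ⊆ Set.Ioc 0 (x / Real.exp 2) := by
    rw [Set.uIcc_of_le hab]
    exact fun t ht => ⟨ha.trans_le ht.1, ht.2.trans hb⟩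
  refine intervalIntegral.integral_eq_sub_of_hasDerivAt
    (f := fun t => (Real.log (x / t))⁻¹) (fun t ht => ?_)
    ((antitoneOn_logWeight x).mono hsub).intervalIntegrable
  have hx : x ≠ 0 := (pos_of_mem_Ioc_div_exp_two (hsub ht)).ne'
  have hlog := two_le_log_div_of_mem_Ioc (hsub ht)
  exact hasDerivAt_inv_log_div hx (hsub ht).1.ne' (by linarith)

lemma antitoneOn_logWeight_Icc_one {x : ℝ} {m : ℕ} (hmx : m ≤ x / Real.exp 2) :
    AntitoneOn (logWeight x) (Set.Icc ((1 : ℕ) : ℝ) m) :=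
  (antitoneOn_logWeight x).mono fun _ ht =>
    ⟨lt_of_lt_of_le (by norm_num) ht.1, ht.2.trans hmx⟩

lemma inv_log_sub_inv_log_le_sum_logWeight {x : ℝ} {m : ℕ} (hm : 1 ≤ m)
    (hmx : m ≤ x / Real.exp 2) :
    (Real.log (x / m))⁻¹ - (Real.log x)⁻¹ ≤ ∑ k ∈ Ico 1 m, logWeight x k := by
  have h := (antitoneOn_logWeight_Icc_one hmx).integral_le_sum_Ico hm
  rwa [integral_logWeight (by norm_num) (by exact_mod_cast hm) hmx, Nat.cast_one, div_one] at h

lemma sum_logWeight_le {x : ℝ} {m : ℕ} (hm : 1 ≤ m) (hmx : m ≤ x / Real.exp 2) :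
    ∑ k ∈ Ico 1 m, logWeight x k ≤
      (Real.log x ^ 2)⁻¹ + ((Real.log (x / m))⁻¹ - (Real.log x)⁻¹) := by
  have h := (antitoneOn_logWeight_Icc_one hmx).sum_le_integral_Ico hm
  rw [integral_logWeight (by norm_num) (by exact_mod_cast hm) hmx, Nat.cast_one, div_one,
    Finset.sum_Ico_add' (fun k : ℕ => logWeight x k) 1 m 1] at h
  calc ∑ k ∈ Ico 1 m, logWeight x k
      ≤ ∑ k ∈ Ico 1 (m + 1), logWeight x k :=
        Finset.sum_le_sum_of_subset_of_nonneg (Finset.Ico_subset_Ico_right m.le_succ)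
          fun k _ _ => logWeight_nonneg x k.cast_nonneg
    _ = logWeight x 1 + ∑ k ∈ Ico (1 + 1) (m + 1), logWeight x k := by
        rw [Finset.sum_eq_sum_Ico_succ_bot (by omega), Nat.cast_one]
    _ ≤ _ := by
        rw [logWeight_one]
        gcongr

/-- The sum of `1 / (k log² (x / (q k)))` over the integers `1 ≤ k < x ^ (1 - c) / q`: up to the
factor `1 / q`, the part of the sum of `logWeight x` over `h < x ^ (1 - c)` that is carried by the
multiples of `q`. -/
noncomputable def multiplesSum (c x q : ℝ) : ℝ :=
  ∑ k ∈ Ico 1 ⌈x ^ (1 - c) / q⌉₊, logWeight (x / q) k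

lemma multiplesSum_nonneg (c x q : ℝ) : 0 ≤ multiplesSum c x q :=
  Finset.sum_nonneg fun k _ => logWeight_nonneg _ k.cast_nonneg

lemma multiplesSum_eq_zero {c x q : ℝ} (hx : 0 ≤ x) (hq : x ^ (1 - c) ≤ q) :
    multiplesSum c x q = 0 := by
  have hceil : ⌈x ^ (1 - c) / q⌉₊ ≤ 1 := by
    rw [Nat.ceil_le, Nat.cast_one]
    exact div_le_one_of_le₀ hq ((Real.rpow_nonneg hx _).trans hq)
  rw [multiplesSum, Finset.Ico_eq_empty_of_le hceil, Finset.sum_empty]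

lemma sum_filter_dvd_logWeight (c x : ℝ) {q : ℕ} (hq : 0 < q) :
    ∑ h ∈ (Ico 1 ⌈x ^ (1 - c)⌉₊).filter (q ∣ ·), logWeight x h =
      (q : ℝ)⁻¹ * multiplesSum c x q := by
  rw [sum_Ico_ceil_filter_dvd (fun h => logWeight x h) _ hq, multiplesSum, Finset.mul_sum]
  simp only [Nat.cast_mul, logWeight_mul]

lemma log_div_ceil_mem_Icc {c x q : ℝ} (hx : 0 < x) (hq : 0 < q) (hqx : q ≤ x ^ (1 - c)) :
    Real.log (x / q / ⌈x ^ (1 - c) / q⌉₊) ∈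
      Set.Icc (c * Real.log x - Real.log 2) (c * Real.log x) := by
  have hone : 1 ≤ x ^ (1 - c) / q := (one_le_div hq).mpr hqx
  have hle := Nat.le_ceil (x ^ (1 - c) / q)
  have hle2 := Nat.ceil_le_two_mul (show 2⁻¹ ≤ x ^ (1 - c) / q by linarith)
  set m : ℝ := (⌈x ^ (1 - c) / q⌉₊ : ℝ)
  have : 0 < m := by linarith
  have hratio : Real.log (x / q / (x ^ (1 - c) / q)) = c * Real.log x := by
    rw [div_div_div_cancel_right₀ hq.ne', Real.log_div hx.ne' (by positivity), Real.log_rpow hx]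
    ring
  constructor
  · rw [← hratio, ← Real.log_div (by positivity) two_ne_zero, div_div]
    gcongr
    linarith
  · rw [← hratio]
    gcongr

lemma multiplesSum_mem_Icc {c x q : ℝ} (hx : 0 < x) (hq : 0 < q) (hqx : q ≤ x ^ (1 - c))
    (hcx : 3 ≤ c * Real.log x) :
    multiplesSum c x q ∈ Set.Icc
      ((Real.log (x / q / ⌈x ^ (1 - c) / q⌉₊))⁻¹ - (Real.log (x / q))⁻¹)
      ((Real.log (x / q) ^ 2)⁻¹ +
        ((Real.log (x / q / ⌈x ^ (1 - c) / q⌉₊))⁻¹ - (Real.log (x / q))⁻¹)) := by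
  have hm : 0 < ⌈x ^ (1 - c) / q⌉₊ := Nat.ceil_pos.mpr (by positivity)
  have hlog := (log_div_ceil_mem_Icc hx hq hqx).1
  have hmx := (le_div_exp_two_iff (div_pos hx hq) (Nat.cast_pos.mpr hm)).mpr
    (by linarith [Real.log_two_lt_d9])
  exact ⟨inv_log_sub_inv_log_le_sum_logWeight hm hmx, sum_logWeight_le hm hmx⟩

lemma log_mul_multiplesSum_le {c x q : ℝ} (hc : 0 < c) (hx : 0 < x) (hq : 0 < q)
    (hcx : 3 ≤ c * Real.log x) : Real.log x * multiplesSum c x q ≤ 2 / c := by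
  have hL : 0 < Real.log x := pos_of_mul_pos_right (by linarith) hc.le
  rcases le_total (x ^ (1 - c)) q with hqx | hqx
  · rw [multiplesSum_eq_zero hx.le hqx, mul_zero]
    positivity
  have hlog := (log_div_ceil_mem_Icc hx hq hqx).1
  have hm : (1 : ℝ) ≤ ⌈x ^ (1 - c) / q⌉₊ := by
    exact_mod_cast Nat.ceil_pos.mpr (show 0 < x ^ (1 - c) / q by positivity)
  have hupper := (multiplesSum_mem_Icc hx hq hqx hcx).2
  set u := Real.log (x / q / ⌈x ^ (1 - c) / q⌉₊)
  set X := Real.log (x / q)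
  have hu : c * Real.log x / 2 ≤ u := by linarith [Real.log_two_lt_d9]
  have huX : u ≤ X := Real.log_le_log (by positivity) (div_le_self (by positivity) hm)
  have hX : (X ^ 2)⁻¹ ≤ X⁻¹ := inv_anti₀ (by linarith) (by nlinarith)
  calc Real.log x * multiplesSum c x q
      ≤ Real.log x * (c * Real.log x / 2)⁻¹ := by
        gcongr
        linarith [inv_anti₀ (by positivity) hu]
    _ = 2 / c := by field_simp

lemma tendsto_log_div_log_div_ceil {c q : ℝ} (hc0 : 0 < c) (hc1 : c < 1) (hq : 0 < q) :
    Tendsto (fun x => Real.log x / Real.log (x / q / ⌈x ^ (1 - c) / q⌉₊)) atTop (𝓝 c⁻¹) := by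
  suffices h : Tendsto (fun x => Real.log (x / q / ⌈x ^ (1 - c) / q⌉₊) / Real.log x) atTop (𝓝 c) by
    simpa only [inv_div] using h.inv₀ hc0.ne'
  have hlower : Tendsto (fun x => c - Real.log 2 / Real.log x) atTop (𝓝 c) := by
    simpa only [sub_zero] using (Real.tendsto_log_atTop.const_div_atTop (Real.log 2)).const_sub c
  have hmem : ∀ᶠ x : ℝ in atTop, Real.log (x / q / ⌈x ^ (1 - c) / q⌉₊) / Real.log x ∈
      Set.Icc (c - Real.log 2 / Real.log x) c := by
    filter_upwards [eventually_gt_atTop 1,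
      (tendsto_rpow_atTop (sub_pos.mpr hc1)).eventually_ge_atTop q] with x hx hqx
    have hL := Real.log_pos hx
    obtain ⟨h1, h2⟩ := log_div_ceil_mem_Icc (by linarith) hq hqx
    refine ⟨?_, (div_le_iff₀ hL).mpr h2⟩
    rw [le_div_iff₀ hL, sub_mul, div_mul_cancel₀ _ hL.ne']
    exact h1
  exact tendsto_of_tendsto_of_tendsto_of_le_of_le' hlower tendsto_const_nhds
    (hmem.mono fun _ h => h.1) (hmem.mono fun _ h => h.2)

lemma tendsto_log_div_log_div {q : ℝ} (hq : q ≠ 0) :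
    Tendsto (fun x => Real.log x / Real.log (x / q)) atTop (𝓝 1) := by
  suffices h : Tendsto (fun x => Real.log (x / q) / Real.log x) atTop (𝓝 1) by
    simpa only [inv_div, inv_one] using h.inv₀ one_ne_zero
  have h : Tendsto (fun x => 1 - Real.log q / Real.log x) atTop (𝓝 1) := by
    simpa only [sub_zero] using (Real.tendsto_log_atTop.const_div_atTop (Real.log q)).const_sub 1
  refine h.congr' ?_
  filter_upwards [eventually_gt_atTop 1] with x hx
  rw [Real.log_div (by linarith) hq, sub_div, div_self (Real.log_pos hx).ne']

lemma tendsto_log_mul_multiplesSum {c q : ℝ} (hc0 : 0 < c) (hc1 : c < 1) (hq : 0 < q) :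
    Tendsto (fun x => Real.log x * multiplesSum c x q) atTop (𝓝 (1 / c - 1)) := by
  have hlower := (tendsto_log_div_log_div_ceil hc0 hc1 hq).sub (tendsto_log_div_log_div hq.ne')
  have hupper := (((tendsto_log_div_log_div hq.ne').pow 2).mul
    tendsto_log_atTop.inv_tendsto_atTop).add hlower
  rw [mul_zero, zero_add] at hupper
  rw [one_div]
  have hbounds : ∀ᶠ x : ℝ in atTop, 0 < x ∧ 0 < Real.log x ∧ q ≤ x ^ (1 - c) ∧
      3 ≤ c * Real.log x :=
    (eventually_gt_atTop 0).and <| (tendsto_log_atTop.eventually_gt_atTop 0).and <|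
      ((tendsto_rpow_atTop (sub_pos.mpr hc1)).eventually_ge_atTop q).and <|
        (tendsto_log_atTop.const_mul_atTop hc0).eventually_ge_atTop 3
  refine tendsto_of_tendsto_of_tendsto_of_le_of_le' hlower hupper ?_ ?_
  · filter_upwards [hbounds] with x ⟨hx, hL, hqx, hcx⟩
    refine Eq.trans_le ?_ (mul_le_mul_of_nonneg_left (multiplesSum_mem_Icc hx hq hqx hcx).1 hL.le)
    rw [mul_sub, ← div_eq_mul_inv, ← div_eq_mul_inv]
  · filter_upwards [hbounds] with x ⟨hx, hL, hqx, hcx⟩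
    refine (mul_le_mul_of_nonneg_left (multiplesSum_mem_Icc hx hq hqx hcx).2 hL.le).trans_eq ?_
    simp only [Pi.inv_apply]
    field_simp

theorem tendsto_log_mul_sum_mul_logWeight {ι : Type*} {a : ι → ℝ} {d : ι → ℕ} {w : ℕ → ℝ} {c : ℝ}
    (hc0 : 0 < c) (hc1 : c < 1) (hd : ∀ i, 0 < d i) (ha : Summable fun i => a i / d i)
    (hw : ∀ h, h ≠ 0 → HasSum (fun i => if d i ∣ h then a i else 0) (w h)) :
    Tendsto (fun x => Real.log x * ∑ h ∈ Ico 1 ⌈x ^ (1 - c)⌉₊, w h * logWeight x h) atTop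
      (𝓝 ((∑' i, a i / d i) * (1 / c - 1))) := by
  have hexpand (x : ℝ) : Real.log x * ∑ h ∈ Ico 1 ⌈x ^ (1 - c)⌉₊, w h * logWeight x h =
      ∑' i, a i / d i * (Real.log x * multiplesSum c x (d i)) := by
    have hsum := hasSum_mul_sum_filter_dvd (T := Ico 1 ⌈x ^ (1 - c)⌉₊)
      (fun h hh => hw h (Nat.pos_iff_ne_zero.mp (Finset.mem_Ico.mp hh).1)) (logWeight x ·)
    rw [← (hsum.mul_left (Real.log x)).tsum_eq]
    refine tsum_congr fun i => ?_
    rw [sum_filter_dvd_logWeight c x (hd i)]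
    ring
  have hd' (i : ι) : (0 : ℝ) < d i := by exact_mod_cast hd i
  simp only [hexpand]
  rw [← tsum_mul_right]
  refine tendsto_tsum_of_dominated_convergence (ha.abs.mul_right (2 / c))
    (fun i => (tendsto_log_mul_multiplesSum hc0 hc1 (hd' i)).const_mul _) ?_
  filter_upwards [eventually_ge_atTop 1,
    (tendsto_log_atTop.const_mul_atTop hc0).eventually_ge_atTop 3] with x hx hcx i
  have hnonneg := mul_nonneg (Real.log_nonneg hx) (multiplesSum_nonneg c x (d i))
  rw [norm_mul, Real.norm_eq_abs, Real.norm_of_nonneg hnonneg]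
  gcongr
  exact log_mul_multiplesSum_le hc0 (by linarith) (hd' i) hcx

/-- The prime divisors of `h`, as elements of the type `Nat.Primes` over which the Euler product
`twinConst` runs. -/
def primeDivisors (h : ℕ) : Finset Nat.Primes := h.primeFactors.subtype Nat.Prime

lemma prod_primeDivisors {M : Type*} [CommMonoid M] (f : ℕ → M) (h : ℕ) :
    ∏ p ∈ primeDivisors h, f p = ∏ p ∈ h.primeFactors, f p :=
  Finset.prod_subtype_of_mem f fun _ => Nat.prime_of_mem_primeFactors

lemma prod_primes_dvd_iff_subset {h : ℕ} (hh : h ≠ 0) (s : Finset Nat.Primes) :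
    ∏ p ∈ s, (p : ℕ) ∣ h ↔ s ⊆ primeDivisors h := by
  constructor
  · intro hdvd p hp
    exact Finset.mem_subtype.mpr
      (Nat.mem_primeFactors.mpr ⟨p.2, (Finset.dvd_prod_of_mem _ hp).trans hdvd, hh⟩)
  · intro hs
    calc ∏ p ∈ s, (p : ℕ)
        ∣ ∏ p ∈ primeDivisors h, (p : ℕ) := Finset.prod_dvd_prod_of_subset _ _ _ hs
      _ = ∏ p ∈ h.primeFactors, p := prod_primeDivisors (fun p => p) h
      _ ∣ h := h.prod_primeFactors_dvd

lemma hasSum_ite_prod_primes_dvd {R : Type*} [CommSemiring R] [TopologicalSpace R] (g : ℕ → R)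
    {h : ℕ} (hh : h ≠ 0) :
    HasSum (fun s : Finset Nat.Primes => if ∏ p ∈ s, (p : ℕ) ∣ h then ∏ p ∈ s, g p else 0)
      (∏ p ∈ h.primeFactors, (1 + g p)) := by
  rw [← prod_primeDivisors, Finset.prod_one_add]
  simp only [prod_primes_dvd_iff_subset hh, ← Finset.mem_powerset]
  convert hasSum_sum_of_ne_finset_zero (L := .unconditional _) (s := (primeDivisors h).powerset)
    fun s hs => if_neg hs using 1
  exact Finset.sum_congr rfl fun s hs => (if_pos hs).symm

/-- The value `1 / (p - 2)` at an odd prime `p`, extended by `0` to `p = 2` (and to `p < 2`), so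
that products over odd primes become products over all primes. -/
noncomputable def oddPrimeWeight (p : ℕ) : ℝ := if 2 < p then 1 / ((p : ℝ) - 2) else 0

lemma prod_filter_two_lt_primeFactors (h : ℕ) :
    ∏ p ∈ h.primeFactors.filter (fun p => 2 < p), (1 + 1 / ((p : ℝ) - 2)) =
      ∏ p ∈ h.primeFactors, (1 + oddPrimeWeight p) := by
  rw [Finset.prod_filter]
  refine Finset.prod_congr rfl fun p _ => ?_
  rw [oddPrimeWeight]
  split_ifs <;> simp

lemma prod_primeFactors_two_mul_oddPrimeWeight {k : ℕ} (hk : k ≠ 0) :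
    ∏ p ∈ (2 * k).primeFactors, (1 + oddPrimeWeight p) =
      ∏ p ∈ k.primeFactors, (1 + oddPrimeWeight p) := by
  rw [Nat.primeFactors_mul two_ne_zero hk, Nat.prime_two.primeFactors]
  refine (Finset.prod_subset Finset.subset_union_right fun p hp hpk => ?_).symm
  obtain rfl : p = 2 := by simpa [hpk] using hp
  simp [oddPrimeWeight]

lemma hasSum_ite_two_mul_prod_primes_dvd {h : ℕ} (hh : h ≠ 0) :
    HasSum (fun s : Finset Nat.Primes =>
        if 2 * ∏ p ∈ s, (p : ℕ) ∣ h then ∏ p ∈ s, oddPrimeWeight p else 0)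
      (if 2 ∣ h then ∏ p ∈ h.primeFactors, (1 + oddPrimeWeight p) else 0) := by
  split_ifs with h2
  · obtain ⟨k, rfl⟩ := h2
    have hk : k ≠ 0 := right_ne_zero_of_mul hh
    rw [prod_primeFactors_two_mul_oddPrimeWeight hk]
    simpa only [Nat.mul_dvd_mul_iff_left two_pos] using hasSum_ite_prod_primes_dvd oddPrimeWeight hk
  · have hodd (s : Finset Nat.Primes) : ¬ 2 * ∏ p ∈ s, (p : ℕ) ∣ h :=
      fun hs => h2 ((dvd_mul_right _ _).trans hs)
    simpa only [hodd, if_false] using hasSum_zero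

lemma oddPrimeWeight_div_nonneg (p : ℕ) : 0 ≤ oddPrimeWeight p / p := by
  rw [oddPrimeWeight]
  split_ifs with hp
  · have hp' : (2 : ℝ) < p := by exact_mod_cast hp
    have : (0 : ℝ) < p - 2 := by linarith
    positivity
  · simp

lemma summable_oddPrimeWeight_div : Summable fun p : ℕ => oddPrimeWeight p / p := by
  refine Summable.of_nonneg_of_le oddPrimeWeight_div_nonneg (fun p => ?_)
    ((Real.summable_one_div_nat_pow.mpr one_lt_two).mul_left 3)
  rw [oddPrimeWeight]
  split_ifs with hp
  · have hp3 : (3 : ℝ) ≤ p := by exact_mod_cast hp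
    rw [div_div, mul_one_div, div_le_div_iff₀ (by nlinarith) (by positivity)]
    nlinarith
  · rw [zero_div]
    positivity

lemma summable_prod_oddPrimeWeight_div :
    Summable fun s : Finset Nat.Primes => ∏ p ∈ s, oddPrimeWeight p / (p : ℕ) :=
  summable_finsetProd_of_summable_nonneg (fun p => oddPrimeWeight_div_nonneg p)
    (summable_oddPrimeWeight_div.comp_injective Nat.Primes.coe_nat_injective)

lemma twinFactor_eq_inv (p : ℕ) :
    (if 2 < p then 1 - 1 / ((p : ℝ) - 1) ^ 2 else 1) = (1 + oddPrimeWeight p / p)⁻¹ := by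
  rw [oddPrimeWeight]
  split_ifs with hp
  · have hp' : (2 : ℝ) < p := by exact_mod_cast hp
    have h0 : (p : ℝ) ≠ 0 := by linarith
    have h1 : (p : ℝ) - 1 ≠ 0 := by linarith
    have h2 : (p : ℝ) - 2 ≠ 0 := by linarith
    refine eq_inv_of_mul_eq_one_left ?_
    field_simp
    ring
  · simp

lemma one_div_twinConst_eq_tsum :
    1 / twinConst = ∑' s : Finset Nat.Primes, ∏ p ∈ s, oddPrimeWeight p / (p : ℕ) := by
  have hsum : Summable fun p : Nat.Primes => oddPrimeWeight p / (p : ℕ) :=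
    summable_oddPrimeWeight_div.comp_injective Nat.Primes.coe_nat_injective
  have hne : ∏' p : Nat.Primes, (1 + oddPrimeWeight p / (p : ℕ)) ≠ 0 :=
    tprod_one_add_ne_zero_of_summable
      (fun p => (add_pos_of_pos_of_nonneg one_pos (oddPrimeWeight_div_nonneg p)).ne') hsum.norm
  have htwin : twinConst = (∏' p : Nat.Primes, (1 + oddPrimeWeight p / (p : ℕ)))⁻¹ := by
    rw [← (Real.multipliable_one_add_of_summable hsum).tprod_inv₀ hne, twinConst]
    exact tprod_congr fun p => twinFactor_eq_inv p
  rw [htwin, one_div, inv_inv, tprod_one_add summable_prod_oddPrimeWeight_div]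

lemma prod_oddPrimeWeight_div_two_mul (s : Finset Nat.Primes) :
    (∏ p ∈ s, oddPrimeWeight p) / ((2 * ∏ p ∈ s, (p : ℕ) : ℕ) : ℝ) =
      1 / 2 * ∏ p ∈ s, oddPrimeWeight p / (p : ℕ) := by
  rw [Finset.prod_div_distrib]
  push_cast
  field_simp

lemma sum_even_eq_sum_Ico_ceil (f : ℕ → ℝ) (x y : ℝ) :
    ∑ h ∈ (Finset.range (⌈y⌉₊ + 1)).filter (fun h : ℕ => 2 ∣ h ∧ 0 < h ∧ (h : ℝ) < y),
        1 / (h : ℝ) * f h * Real.log (x / h) ^ (-2 : ℤ) =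
      ∑ h ∈ Ico 1 ⌈y⌉₊, (if 2 ∣ h then f h else 0) * logWeight x h := by
  have hset : (Finset.range (⌈y⌉₊ + 1)).filter (fun h : ℕ => 2 ∣ h ∧ 0 < h ∧ (h : ℝ) < y) =
      (Ico 1 ⌈y⌉₊).filter (2 ∣ ·) := by
    ext h
    simp only [Finset.mem_filter, Finset.mem_range, Finset.mem_Ico, ← Nat.lt_ceil]
    omega
  simp only [hset, Finset.sum_filter, ite_mul, zero_mul, logWeight]
  refine Finset.sum_congr rfl fun h _ => if_congr Iff.rfl (by ring) rfl

theorem tendsto_log_mul_sum_even {c : ℝ} (hc0 : 0 < c) (hc1 : c < 1) :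
    Tendsto (fun x => Real.log x *
        ∑ h ∈ (Finset.range (⌈x ^ (1 - c)⌉₊ + 1)).filter
            (fun h : ℕ => 2 ∣ h ∧ 0 < h ∧ (h : ℝ) < x ^ (1 - c)),
          (1 / (h : ℝ)) *
            (∏ p ∈ h.primeFactors.filter (fun p => 2 < p), (1 + 1 / ((p : ℝ) - 2))) *
            (Real.log (x / h)) ^ (-2 : ℤ)) atTop
      (𝓝 ((1 / twinConst) * (1 / (2 * c) - 1 / 2))) := by
  have hd (s : Finset Nat.Primes) : 0 < 2 * ∏ p ∈ s, (p : ℕ) :=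
    Nat.mul_pos two_pos (Finset.prod_pos fun p _ => p.2.pos)
  have hsummable : Summable fun s : Finset Nat.Primes =>
      (∏ p ∈ s, oddPrimeWeight p) / ((2 * ∏ p ∈ s, (p : ℕ) : ℕ) : ℝ) := by
    simpa only [prod_oddPrimeWeight_div_two_mul] using summable_prod_oddPrimeWeight_div.mul_left _
  have hlim := tendsto_log_mul_sum_mul_logWeight hc0 hc1 hd hsummable
    fun h => hasSum_ite_two_mul_prod_primes_dvd
  have hconst : 1 / 2 * (1 / twinConst) * (1 / c - 1) =
      (1 / twinConst) * (1 / (2 * c) - 1 / 2) := by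
    ring
  simp only [prod_oddPrimeWeight_div_two_mul, tsum_mul_left, ← one_div_twinConst_eq_tsum,
    hconst] at hlim
  simpa only [sum_even_eq_sum_Ico_ceil, prod_filter_two_lt_primeFactors] using hlim

theorem sum_weighted_asymptotic_general (c : ℝ) (hc0 : 0 < c) (hc1 : c < 1) :
    ∀ ε > (0 : ℝ), ∃ x₀ : ℝ, ∀ x ≥ x₀,
      |(∑ h ∈ (Finset.range (⌈x ^ (1 - c)⌉₊ + 1)).filter
            (fun h : ℕ => 2 ∣ h ∧ 0 < h ∧ (h : ℝ) < x ^ (1 - c)),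
          (1 / (h : ℝ)) *
            (∏ p ∈ h.primeFactors.filter (fun p => 2 < p), (1 + 1 / ((p : ℝ) - 2))) *
            (Real.log (x / h)) ^ (-2 : ℤ)) -
        (1 / twinConst) * (1 / (2 * c) - 1 / 2) * (Real.log x)⁻¹| ≤
      ε * (Real.log x)⁻¹ := fun _ hε =>
  Filter.eventually_atTop.mp <| eventually_abs_sub_le_of_tendsto_mul
    (tendsto_log_atTop.eventually_gt_atTop 0) (tendsto_log_mul_sum_even hc0 hc1) hε

/-- For fixed `1/2 ≤ c < 1`,
`Σ_{h < x^{1−c}, h even} (1/h)·∏_{p∣h, p>2}(1+1/(p−2))·(log(x/h))⁻²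
  = (1+o(1))·(1/𝔖)·(1/(2c) − 1/2)·(log x)⁻¹` as `x → ∞`. -/
theorem sum_weighted_asymptotic (c : ℝ) (hc1 : 1 / 2 ≤ c) (hc2 : c < 1) :
    ∀ ε > (0 : ℝ), ∃ x₀ : ℝ, ∀ x ≥ x₀,
      |(∑ h ∈ (Finset.range (⌈x ^ (1 - c)⌉₊ + 1)).filter
            (fun h : ℕ => 2 ∣ h ∧ 0 < h ∧ (h : ℝ) < x ^ (1 - c)),
          (1 / (h : ℝ)) *
            (∏ p ∈ h.primeFactors.filter (fun p => 2 < p), (1 + 1 / ((p : ℝ) - 2))) *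
            (Real.log (x / h)) ^ (-2 : ℤ)) -
        (1 / twinConst) * (1 / (2 * c) - 1 / 2) * (Real.log x)⁻¹| ≤
      ε * (Real.log x)⁻¹ :=
  sum_weighted_asymptotic_general c (by linarith) hc2
end

section
/- For every c with 8/9 ≤ c < 1 and every ε > 0 there exists x₀ such that for all x ≥ x₀: T'_c(x) ≤ (1 + ε)·8·(1/c − 1)·x/log x. -/
open Real Finset

attribute [local instance] Classical.propDecidable

/-- `Pplus n` is the largest prime factor of `n`, with the convention `Pplus 1 = 1`. -/
noncomputable def Pplus (n : ℕ) : ℕ := if n = 1 then 1 else n.primeFactors.sup id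

/-- `T' c x = #{p ≤ x : p prime, P⁺(p-1) ≥ x^c}`. -/
noncomputable def T' (c x : ℝ) : ℕ :=
  ((Finset.range (⌊x⌋₊ + 1)).filter
    (fun p : ℕ => p.Prime ∧ x ^ c ≤ (Pplus (p - 1) : ℝ))).card

/-!
A prime `p ≤ x` with `q = P⁺(p - 1) ≥ x ^ c` is `m * q + 1` with `m ≤ x ^ (1 - c)` even, so that `q`
is one of the integers `n ≤ y = x / m` for which neither `n` nor `m * n + 1` has a small prime
factor. Selberg's sieve with moduli up to `y ^ (1 / 2 - δ)` bounds their number by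
`(8 + o(1)) * 𝔖(m) * y / log y ^ 2`. The lower bound for its denominator comes from
`∑ n ≤ z, d(n) / n ≥ log z ^ 2 / 2`: the Euler factors of the two are compared exactly at the primes
`p ≤ w`, at the price of dividing `z` by `∏ p ≤ w, p`, and by an inequality at the others.

The Euler factor of the singular series `𝔖(m)` at `p`, which depends only on whether `p ∣ m`, has
mean value `1` over all `m`; it vanishes at `p = 2` for odd `m`, which accounts for the restriction
to even `m`. The inequality used for `p > w` raises the product of the means by a factor of at most
`exp (4 / w)`. So `𝔖(m)` can be replaced by `1` in the sum over all `m ≤ x ^ (1 - c)` of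
`x / (m * log (x / m) ^ 2)`, which is `(1 / c - 1 + o(1)) * x / log x` by comparison with an
integral. For `c ≤ 1 / 2` Chebyshev's bound for `π(x)` suffices, as then `8 * (1 / c - 1) ≥ 8`.
-/

section Selberg

variable {ι : Type*} {𝒟 ℰ : Finset (Finset ι)} {ρ g : ι → ℝ}

/-- The denominator `S` of Selberg's sieve, for a support `𝒟` consisting of finite sets of sifting
conditions instead of squarefree moduli. -/
noncomputable def selbergSum (𝒟 : Finset (Finset ι)) (g : ι → ℝ) : ℝ :=
  ∑ D ∈ 𝒟, ∏ p ∈ D, g p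

theorem selbergSum_pos (hg : ∀ D ∈ 𝒟, ∀ p ∈ D, 0 < g p) (hempty : ∅ ∈ 𝒟) :
    0 < selbergSum 𝒟 g :=
  sum_pos (fun D hD ↦ prod_pos (hg D hD)) ⟨∅, hempty⟩

theorem selbergSum_mono {f : ι → ℝ} (hf : ∀ D ∈ 𝒟, ∀ p ∈ D, 0 ≤ f p)
    (hfg : ∀ D ∈ 𝒟, ∀ p ∈ D, f p ≤ g p) : selbergSum 𝒟 f ≤ selbergSum 𝒟 g :=
  sum_le_sum fun D hD ↦ prod_le_prod (hf D hD) (hfg D hD)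

/-- The odds `ρ / (1 - ρ)` of a sifting density `ρ`; they play the role of the function usually
called `h` or `g` in Selberg's sieve. -/
noncomputable def odds (ρ : ι → ℝ) (p : ι) : ℝ := ρ p / (1 - ρ p)

theorem odds_pos {p : ι} (h0 : 0 < ρ p) (h1 : ρ p < 1) : 0 < odds ρ p :=
  div_pos h0 (sub_pos.mpr h1)

theorem mul_one_add_odds {p : ι} (h1 : ρ p ≠ 1) : ρ p * (1 + odds ρ p) = odds ρ p := by
  have : 1 - ρ p ≠ 0 := sub_ne_zero.mpr h1.symm
  rw [odds]
  field_simp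
  ring

theorem one_add_inv_odds {p : ι} (h0 : ρ p ≠ 0) : 1 + (odds ρ p)⁻¹ = (ρ p)⁻¹ := by
  rw [odds]
  field_simp
  ring

/-- A sifting density on `𝒟`: every condition occurring in `𝒟` holds with a density strictly
between `0` and `1`. -/
def IsSieveDensity (𝒟 : Finset (Finset ι)) (ρ : ι → ℝ) : Prop :=
  ∀ D ∈ 𝒟, ∀ p ∈ D, 0 < ρ p ∧ ρ p < 1

theorem IsSieveDensity.odds_pos (hρ : IsSieveDensity 𝒟 ρ) : ∀ D ∈ 𝒟, ∀ p ∈ D, 0 < odds ρ p :=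
  fun D hD p hp ↦ _root_.odds_pos (hρ D hD p hp).1 (hρ D hD p hp).2

theorem IsSieveDensity.prod_pos (hρ : IsSieveDensity 𝒟 ρ) {D : Finset ι} (hD : D ∈ 𝒟) :
    0 < ∏ p ∈ D, ρ p :=
  Finset.prod_pos fun p hp ↦ (hρ D hD p hp).1

theorem card_le_sum_sq_of_apply_empty {α : Type*} (A : Finset α) (bad : α → ι → Prop)
    [∀ n p, Decidable (bad n p)] {l : Finset ι → ℝ} (hempty : ∅ ∈ 𝒟) (hl : l ∅ = 1) :
    (#{n ∈ A | ∀ D ∈ 𝒟, ∀ p ∈ D, ¬ bad n p} : ℝ)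
      ≤ ∑ n ∈ A, (∑ D ∈ 𝒟, if ∀ p ∈ D, bad n p then l D else 0) ^ 2 := by
  rw [← sum_boole]
  refine sum_le_sum fun n _ ↦ ?_
  split_ifs with hn
  · have hsingle : ∑ D ∈ 𝒟, (if ∀ p ∈ D, bad n p then l D else 0) = 1 := by
      rw [sum_eq_single_of_mem ∅ hempty, if_pos (by simp), hl]
      intro D hD hne
      obtain ⟨p, hp⟩ := nonempty_iff_ne_empty.mpr hne
      exact if_neg fun h ↦ hn D hD p hp (h p hp)
    rw [hsingle, one_pow]
  · positivity

variable [DecidableEq ι]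

theorem prod_one_add_mul_selbergSum_le (h𝒟 : IsLowerSet (𝒟 : Set (Finset ι)))
    (hg : ∀ D ∈ 𝒟, ∀ p ∈ D, 0 ≤ g p) {R : Finset ι}
    (hR : ∀ F ∈ ℰ, Disjoint R F ∧ R ∪ F ∈ 𝒟) :
    (∏ p ∈ R, (1 + g p)) * selbergSum ℰ g ≤ selbergSum 𝒟 g := by
  have hinj : Set.InjOn (fun x : Finset ι × Finset ι ↦ x.1 ∪ x.2) (R.powerset ×ˢ ℰ : Finset _) := by
    rintro ⟨T, F⟩ hTF ⟨T', F'⟩ hTF' h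
    simp only [coe_product, Set.mem_prod, mem_coe, mem_powerset] at hTF hTF' h
    have hF := (hR F hTF.2).1
    have hF' := (hR F' hTF'.2).1
    have hT : T = T' := by
      simpa [union_inter_distrib_right, inter_eq_left.mpr hTF.1, inter_eq_left.mpr hTF'.1,
        disjoint_iff_inter_eq_empty.mp hF.symm,
        disjoint_iff_inter_eq_empty.mp hF'.symm] using congrArg (· ∩ R) h
    have hFF : F = F' := by
      simpa [union_sdiff_distrib, sdiff_eq_empty_iff_subset.mpr hTF.1,
        sdiff_eq_empty_iff_subset.mpr hTF'.1, hF.symm.sdiff_eq_left, hF'.symm.sdiff_eq_left]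
        using congrArg (· \ R) h
    rw [hT, hFF]
  calc (∏ p ∈ R, (1 + g p)) * selbergSum ℰ g
      = ∑ x ∈ R.powerset ×ˢ ℰ, ∏ p ∈ x.1 ∪ x.2, g p := by
        rw [prod_one_add, selbergSum, sum_mul_sum, ← sum_product']
        refine sum_congr rfl fun x hx ↦ (prod_union ?_).symm
        rw [mem_product, mem_powerset] at hx
        exact (hR x.2 hx.2).1.mono_left hx.1
    _ = ∑ D ∈ (R.powerset ×ˢ ℰ).image (fun x ↦ x.1 ∪ x.2), ∏ p ∈ D, g p :=
        (sum_image (f := fun D ↦ ∏ p ∈ D, g p) hinj).symm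
    _ ≤ selbergSum 𝒟 g := by
        refine sum_le_sum_of_subset_of_nonneg ?_ fun D hD _ ↦ prod_nonneg (hg D hD)
        rw [image_subset_iff]
        intro x hx
        rw [mem_product, mem_powerset] at hx
        exact h𝒟 (union_subset_union_left hx.1) (hR x.2 hx.2).2

theorem selbergSum_le_prod_one_add_mul {Q : Finset ι} (hQ : ∀ p ∈ Q, 0 ≤ g p)
    (hg : ∀ E ∈ ℰ, ∀ p ∈ E, 0 ≤ g p) (hsdiff : ∀ D ∈ 𝒟, D \ Q ∈ ℰ) :
    selbergSum 𝒟 g ≤ (∏ p ∈ Q, (1 + g p)) * selbergSum ℰ g := by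
  have hinj : Set.InjOn (fun D ↦ (D ∩ Q, D \ Q)) (𝒟 : Set (Finset ι)) := by
    intro D _ D' _ h
    rw [Prod.mk.injEq] at h
    rw [← sdiff_union_inter D Q, ← sdiff_union_inter D' Q, h.1, h.2]
  calc selbergSum 𝒟 g = ∑ D ∈ 𝒟, (∏ p ∈ D ∩ Q, g p) * ∏ p ∈ D \ Q, g p :=
        sum_congr rfl fun D _ ↦ (prod_inter_mul_prod_sdiff D Q g).symm
    _ = ∑ x ∈ 𝒟.image (fun D ↦ (D ∩ Q, D \ Q)), (∏ p ∈ x.1, g p) * ∏ p ∈ x.2, g p :=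
        (sum_image (f := fun x : Finset ι × Finset ι ↦ (∏ p ∈ x.1, g p) * ∏ p ∈ x.2, g p) hinj).symm
    _ ≤ ∑ x ∈ Q.powerset ×ˢ ℰ, (∏ p ∈ x.1, g p) * ∏ p ∈ x.2, g p := by
        refine sum_le_sum_of_subset_of_nonneg ?_ fun x hx _ ↦ ?_
        · rw [image_subset_iff]
          exact fun D hD ↦ mem_product.mpr ⟨mem_powerset.mpr inter_subset_right, hsdiff D hD⟩
        · rw [mem_product, mem_powerset] at hx
          exact mul_nonneg (prod_nonneg fun p hp ↦ hQ p (hx.1 hp)) (prod_nonneg (hg x.2 hx.2))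
    _ = (∏ p ∈ Q, (1 + g p)) * selbergSum ℰ g := by
        rw [prod_one_add, selbergSum, sum_mul_sum, ← sum_product']

theorem sum_superset_eq_prod_mul_selbergSum (D : Finset ι) :
    ∑ E ∈ 𝒟 with D ⊆ E, ∏ p ∈ E, g p
      = (∏ p ∈ D, g p) * selbergSum ((𝒟.filter (D ⊆ ·)).image (· \ D)) g := by
  have hinj : Set.InjOn (· \ D) (𝒟.filter (D ⊆ ·) : Set (Finset ι)) := by
    intro E hE E' hE' h
    rw [mem_coe, mem_filter] at hE hE'
    rw [← sdiff_union_of_subset hE.2, ← sdiff_union_of_subset hE'.2]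
    exact congrArg (· ∪ D) h
  rw [selbergSum, sum_image hinj, mul_sum]
  refine sum_congr rfl fun E hE ↦ ?_
  rw [mul_comm, prod_sdiff (mem_filter.mp hE).2]

theorem sum_Icc_neg_one_pow_card (L E : Finset ι) :
    ∑ D ∈ Icc L E, (-1 : ℝ) ^ #D = if L = E then (-1) ^ #L else 0 := by
  by_cases hLE : L ⊆ E
  · rw [Icc_eq_image_powerset hLE, sum_image]
    · have hpow : ∀ T ∈ (E \ L).powerset, (-1 : ℝ) ^ #(L ∪ T) = (-1) ^ #L * (-1) ^ #T := by
        intro T hT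
        rw [card_union_of_disjoint (disjoint_sdiff.mono_right (mem_powerset.mp hT)), pow_add]
      have halt : ∑ T ∈ (E \ L).powerset, (-1 : ℝ) ^ #T = if E \ L = ∅ then 1 else 0 :=
        mod_cast congrArg (Int.cast : ℤ → ℝ) (sum_powerset_neg_one_pow_card (x := E \ L))
      rw [sum_congr rfl hpow, ← mul_sum, halt, mul_ite, mul_one, mul_zero]
      exact if_congr (sdiff_eq_empty_iff_subset.trans
        ⟨fun h ↦ hLE.antisymm h, fun h ↦ h.symm.subset⟩) rfl rfl
    · intro T hT T' hT' h
      rw [mem_coe, mem_powerset] at hT hT'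
      rw [← union_sdiff_cancel_left (disjoint_sdiff.mono_right hT),
        ← union_sdiff_cancel_left (disjoint_sdiff.mono_right hT')]
      exact congrArg (· \ L) h
  · rw [if_neg fun h ↦ hLE h.subset, Icc_eq_empty hLE, sum_empty]

theorem sum_superset_neg_one_pow_mul_sum_superset (h𝒟 : IsLowerSet (𝒟 : Set (Finset ι)))
    (f : Finset ι → ℝ) {L : Finset ι} (hL : L ∈ 𝒟) :
    ∑ D ∈ 𝒟 with L ⊆ D, (-1) ^ #D * ∑ E ∈ 𝒟 with D ⊆ E, f E = (-1) ^ #L * f L := by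
  calc ∑ D ∈ 𝒟 with L ⊆ D, (-1) ^ #D * ∑ E ∈ 𝒟 with D ⊆ E, f E
      = ∑ E ∈ 𝒟, ∑ D ∈ Icc L E, (-1) ^ #D * f E := by
        simp_rw [mul_sum]
        refine sum_comm' fun D E ↦ ?_
        simp only [mem_filter, mem_Icc]
        exact ⟨fun h ↦ ⟨⟨h.1.2, h.2.2⟩, h.2.1⟩,
          fun h ↦ ⟨⟨h𝒟 h.1.2 h.2, h.1.1⟩, h.2, h.1.2⟩⟩
    _ = ∑ E ∈ 𝒟, if L = E then (-1) ^ #L * f E else 0 := by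
        simp_rw [← sum_mul, sum_Icc_neg_one_pow_card, ite_mul, zero_mul]
    _ = (-1) ^ #L * f L := by rw [sum_ite_eq, if_pos hL]

/-- Selberg's weights, the minimisers of the quadratic form
`∑ D₁, ∑ D₂, λ D₁ * λ D₂ * ∏ p ∈ D₁ ∪ D₂, ρ p` under `λ ∅ = 1`. -/
noncomputable def selbergWeight (𝒟 : Finset (Finset ι)) (ρ : ι → ℝ) (D : Finset ι) : ℝ :=
  (-1) ^ #D * (∑ E ∈ 𝒟 with D ⊆ E, ∏ p ∈ E, odds ρ p) /
    ((∏ p ∈ D, ρ p) * selbergSum 𝒟 (odds ρ))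

theorem selbergWeight_empty (hρ : IsSieveDensity 𝒟 ρ) (hempty : ∅ ∈ 𝒟) :
    selbergWeight 𝒟 ρ ∅ = 1 := by
  have hS := selbergSum_pos hρ.odds_pos hempty
  simp only [selbergWeight, card_empty, pow_zero, one_mul, empty_subset, filter_true, prod_empty]
  exact div_self hS.ne'

theorem abs_selbergWeight_le_one (h𝒟 : IsLowerSet (𝒟 : Set (Finset ι)))
    (hρ : IsSieveDensity 𝒟 ρ) {D : Finset ι} (hD : D ∈ 𝒟) : |selbergWeight 𝒟 ρ D| ≤ 1 := by
  have hodds := hρ.odds_pos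
  have hS := selbergSum_pos hodds (h𝒟 (empty_subset D) hD)
  have hnonneg : 0 ≤ ∑ E ∈ 𝒟 with D ⊆ E, ∏ p ∈ E, odds ρ p :=
    sum_nonneg fun E hE ↦ prod_nonneg fun p hp ↦ (hodds E (mem_filter.mp hE).1 p hp).le
  have hprod : ∏ p ∈ D, odds ρ p = (∏ p ∈ D, ρ p) * ∏ p ∈ D, (1 + odds ρ p) := by
    rw [← prod_mul_distrib]
    exact prod_congr rfl fun p hp ↦ (mul_one_add_odds (hρ D hD p hp).2.ne).symm
  rw [selbergWeight, abs_div, abs_mul, abs_pow, abs_neg, abs_one, one_pow, one_mul,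
    abs_of_nonneg hnonneg, abs_of_pos (mul_pos (hρ.prod_pos hD) hS),
    div_le_one (mul_pos (hρ.prod_pos hD) hS), sum_superset_eq_prod_mul_selbergSum, hprod, mul_assoc]
  refine mul_le_mul_of_nonneg_left ?_ (hρ.prod_pos hD).le
  refine prod_one_add_mul_selbergSum_le h𝒟 (fun E hE p hp ↦ (hodds E hE p hp).le) fun F hF ↦ ?_
  obtain ⟨E, hE, rfl⟩ := mem_image.mp hF
  rw [mem_filter] at hE
  exact ⟨disjoint_sdiff, by rw [union_sdiff_of_subset hE.2]; exact hE.1⟩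

theorem sum_superset_prod_mul_selbergWeight (h𝒟 : IsLowerSet (𝒟 : Set (Finset ι)))
    (hρ : IsSieveDensity 𝒟 ρ) {L : Finset ι} (hL : L ∈ 𝒟) :
    ∑ D ∈ 𝒟 with L ⊆ D, (∏ p ∈ D, ρ p) * selbergWeight 𝒟 ρ D
      = (-1) ^ #L * (∏ p ∈ L, odds ρ p) / selbergSum 𝒟 (odds ρ) := by
  rw [← sum_superset_neg_one_pow_mul_sum_superset h𝒟 (fun E ↦ ∏ p ∈ E, odds ρ p) hL,
    sum_div]
  refine sum_congr rfl fun D hD ↦ ?_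
  have := (hρ.prod_pos (mem_filter.mp hD).1).ne'
  rw [selbergWeight]
  field_simp

theorem prod_union_eq_sum_powerset_inter (h𝒟 : IsLowerSet (𝒟 : Set (Finset ι)))
    (hρ : IsSieveDensity 𝒟 ρ) {D₁ D₂ : Finset ι} (hD₁ : D₁ ∈ 𝒟) :
    ∏ p ∈ D₁ ∪ D₂, ρ p = ∑ L ∈ (D₁ ∩ D₂).powerset,
      (∏ p ∈ L, odds ρ p)⁻¹ * ((∏ p ∈ D₁, ρ p) * ∏ p ∈ D₂, ρ p) := by
  have hinter : D₁ ∩ D₂ ∈ 𝒟 := h𝒟 (inter_subset_left : D₁ ∩ D₂ ⊆ D₁) hD₁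
  have hinv : (∏ p ∈ D₁ ∩ D₂, ρ p)⁻¹ = ∑ L ∈ (D₁ ∩ D₂).powerset, (∏ p ∈ L, odds ρ p)⁻¹ := by
    simp_rw [← prod_inv_distrib]
    rw [← prod_one_add]
    exact prod_congr rfl fun p hp ↦ (one_add_inv_odds (hρ _ hinter p hp).1.ne').symm
  rw [← sum_mul, ← hinv, ← prod_union_inter, mul_comm (∏ p ∈ D₁ ∪ D₂, ρ p),
    inv_mul_cancel_left₀ (hρ.prod_pos hinter).ne']

theorem sum_sum_mul_prod_union (h𝒟 : IsLowerSet (𝒟 : Set (Finset ι)))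
    (hρ : IsSieveDensity 𝒟 ρ) (l : Finset ι → ℝ) :
    ∑ D₁ ∈ 𝒟, ∑ D₂ ∈ 𝒟, l D₁ * l D₂ * ∏ p ∈ D₁ ∪ D₂, ρ p
      = ∑ L ∈ 𝒟, (∏ p ∈ L, odds ρ p)⁻¹ * (∑ D ∈ 𝒟 with L ⊆ D, (∏ p ∈ D, ρ p) * l D) ^ 2 := by
  calc ∑ D₁ ∈ 𝒟, ∑ D₂ ∈ 𝒟, l D₁ * l D₂ * ∏ p ∈ D₁ ∪ D₂, ρ p
      = ∑ D₁ ∈ 𝒟, ∑ D₂ ∈ 𝒟, ∑ L ∈ (D₁ ∩ D₂).powerset, (∏ p ∈ L, odds ρ p)⁻¹ *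
          (((∏ p ∈ D₁, ρ p) * l D₁) * ((∏ p ∈ D₂, ρ p) * l D₂)) := by
        refine sum_congr rfl fun D₁ hD₁ ↦ sum_congr rfl fun D₂ _ ↦ ?_
        rw [prod_union_eq_sum_powerset_inter h𝒟 hρ hD₁, mul_sum]
        exact sum_congr rfl fun L _ ↦ by ring
    _ = ∑ D₁ ∈ 𝒟, ∑ L ∈ 𝒟 with L ⊆ D₁, ∑ D₂ ∈ 𝒟 with L ⊆ D₂, (∏ p ∈ L, odds ρ p)⁻¹ *
          (((∏ p ∈ D₁, ρ p) * l D₁) * ((∏ p ∈ D₂, ρ p) * l D₂)) := by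
        refine sum_congr rfl fun D₁ hD₁ ↦ sum_comm' fun D₂ L ↦ ?_
        simp only [mem_powerset, subset_inter_iff, mem_filter]
        exact ⟨fun h ↦ ⟨⟨h.1, h.2.2⟩, h𝒟 h.2.1 hD₁, h.2.1⟩, fun h ↦ ⟨h.1.1, h.2.2, h.1.2⟩⟩
    _ = ∑ L ∈ 𝒟, ∑ D₁ ∈ 𝒟 with L ⊆ D₁, ∑ D₂ ∈ 𝒟 with L ⊆ D₂, (∏ p ∈ L, odds ρ p)⁻¹ *
          (((∏ p ∈ D₁, ρ p) * l D₁) * ((∏ p ∈ D₂, ρ p) * l D₂)) :=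
        sum_comm' fun D₁ L ↦ by simp only [mem_filter]; tauto
    _ = _ := by simp_rw [sq, sum_mul_sum, mul_sum]

theorem sum_sum_selbergWeight_mul_prod_union (h𝒟 : IsLowerSet (𝒟 : Set (Finset ι)))
    (hρ : IsSieveDensity 𝒟 ρ) (hempty : ∅ ∈ 𝒟) :
    ∑ D₁ ∈ 𝒟, ∑ D₂ ∈ 𝒟, selbergWeight 𝒟 ρ D₁ * selbergWeight 𝒟 ρ D₂ * ∏ p ∈ D₁ ∪ D₂, ρ p
      = (selbergSum 𝒟 (odds ρ))⁻¹ := by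
  have hS := selbergSum_pos hρ.odds_pos hempty
  have hterm : ∀ L ∈ 𝒟, (∏ p ∈ L, odds ρ p)⁻¹ *
      (∑ D ∈ 𝒟 with L ⊆ D, (∏ p ∈ D, ρ p) * selbergWeight 𝒟 ρ D) ^ 2
        = (∏ p ∈ L, odds ρ p) / selbergSum 𝒟 (odds ρ) ^ 2 := by
    intro L hL
    have : ∏ p ∈ L, odds ρ p ≠ 0 := (prod_pos (hρ.odds_pos L hL)).ne'
    rw [sum_superset_prod_mul_selbergWeight h𝒟 hρ hL, div_pow, mul_pow, ← pow_mul,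
      Even.neg_one_pow ⟨#L, by ring⟩]
    field_simp
  rw [sum_sum_mul_prod_union h𝒟 hρ, sum_congr rfl hterm, ← sum_div, ← selbergSum]
  field_simp

theorem sum_sq_sum_ite_eq_sum_sum_card {α : Type*} (A : Finset α) (bad : α → ι → Prop)
    [∀ n p, Decidable (bad n p)] (l : Finset ι → ℝ) :
    ∑ n ∈ A, (∑ D ∈ 𝒟, if ∀ p ∈ D, bad n p then l D else 0) ^ 2
      = ∑ D₁ ∈ 𝒟, ∑ D₂ ∈ 𝒟, l D₁ * l D₂ * #{n ∈ A | ∀ p ∈ D₁ ∪ D₂, bad n p} := by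
  simp_rw [sq, sum_mul_sum]
  rw [sum_comm]
  refine sum_congr rfl fun D₁ _ ↦ ?_
  rw [sum_comm]
  refine sum_congr rfl fun D₂ _ ↦ ?_
  rw [mul_comm, ← nsmul_eq_mul, ← sum_const, sum_filter]
  refine sum_congr rfl fun n _ ↦ ?_
  rw [ite_zero_mul_ite_zero]
  exact if_congr forall_mem_union.symm rfl rfl

theorem selberg_upper_bound {α : Type*} (h𝒟 : IsLowerSet (𝒟 : Set (Finset ι)))
    (hρ : IsSieveDensity 𝒟 ρ) (hempty : ∅ ∈ 𝒟) (A : Finset α) (bad : α → ι → Prop)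
    [∀ n p, Decidable (bad n p)] (X : ℝ) (r : Finset ι → ℝ)
    (hcount : ∀ D₁ ∈ 𝒟, ∀ D₂ ∈ 𝒟,
      |(#{n ∈ A | ∀ p ∈ D₁ ∪ D₂, bad n p} : ℝ) - X * ∏ p ∈ D₁ ∪ D₂, ρ p| ≤ r D₁ * r D₂) :
    (#{n ∈ A | ∀ D ∈ 𝒟, ∀ p ∈ D, ¬ bad n p} : ℝ)
      ≤ X / selbergSum 𝒟 (odds ρ) + (∑ D ∈ 𝒟, r D) ^ 2 := by
  set l := selbergWeight 𝒟 ρ with hl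
  have hterm : ∀ D₁ ∈ 𝒟, ∀ D₂ ∈ 𝒟, l D₁ * l D₂ * #{n ∈ A | ∀ p ∈ D₁ ∪ D₂, bad n p}
      ≤ X * (l D₁ * l D₂ * ∏ p ∈ D₁ ∪ D₂, ρ p) + r D₁ * r D₂ := by
    intro D₁ hD₁ D₂ hD₂
    have habs : |l D₁ * l D₂| ≤ 1 := by
      rw [abs_mul]
      exact mul_le_one₀ (abs_selbergWeight_le_one h𝒟 hρ hD₁) (abs_nonneg _)
        (abs_selbergWeight_le_one h𝒟 hρ hD₂)
    have herr := (le_abs_self _).trans_eq (abs_mul (l D₁ * l D₂)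
      (#{n ∈ A | ∀ p ∈ D₁ ∪ D₂, bad n p} - X * ∏ p ∈ D₁ ∪ D₂, ρ p))
    have herr' := mul_le_of_le_one_left (abs_nonneg
      (#{n ∈ A | ∀ p ∈ D₁ ∪ D₂, bad n p} - X * ∏ p ∈ D₁ ∪ D₂, ρ p)) habs
    linarith [hcount D₁ hD₁ D₂ hD₂]
  calc (#{n ∈ A | ∀ D ∈ 𝒟, ∀ p ∈ D, ¬ bad n p} : ℝ)
      ≤ ∑ D₁ ∈ 𝒟, ∑ D₂ ∈ 𝒟, l D₁ * l D₂ * #{n ∈ A | ∀ p ∈ D₁ ∪ D₂, bad n p} := by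
        rw [← sum_sq_sum_ite_eq_sum_sum_card]
        exact card_le_sum_sq_of_apply_empty A bad hempty (selbergWeight_empty hρ hempty)
    _ ≤ ∑ D₁ ∈ 𝒟, ∑ D₂ ∈ 𝒟, (X * (l D₁ * l D₂ * ∏ p ∈ D₁ ∪ D₂, ρ p) + r D₁ * r D₂) :=
        sum_le_sum fun D₁ hD₁ ↦ sum_le_sum fun D₂ hD₂ ↦ hterm D₁ hD₁ D₂ hD₂
    _ = X / selbergSum 𝒟 (odds ρ) + (∑ D ∈ 𝒟, r D) ^ 2 := by
        simp_rw [sum_add_distrib, ← mul_sum, ← sum_mul]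
        rw [hl, sum_sum_selbergWeight_mul_prod_union h𝒟 hρ hempty, sq, div_eq_mul_inv]

end Selberg
section PairSieve

theorem abs_card_Ioc_filter_modEq_sub_le {a b : ℕ} (hab : a ≤ b) {r : ℕ} (hr : 0 < r) (v : ℕ) :
    |(#{n ∈ Ioc a b | n ≡ v [MOD r]} : ℝ) - ((b : ℝ) - a) / r| ≤ 1 := by
  have hcard := Nat.Ioc_filter_modEq_card a b hr v
  set A := ((b : ℚ) - v) / r
  set B := ((a : ℚ) - v) / r
  have hBA : ⌊B⌋ ≤ ⌊A⌋ := Int.floor_le_floor <|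
    div_le_div_of_nonneg_right (sub_le_sub_right (Nat.cast_le.mpr hab) _) (Nat.cast_nonneg r)
  rw [max_eq_left (sub_nonneg.mpr hBA)] at hcard
  have hdiff : ((b : ℚ) - a) / r = A - B := by rw [← sub_div]; ring
  have hQ : |(#{n ∈ Ioc a b | n ≡ v [MOD r]} : ℚ) - ((b : ℚ) - a) / r| ≤ 1 := by
    have hcast : (#{n ∈ Ioc a b | n ≡ v [MOD r]} : ℚ) = ⌊A⌋ - ⌊B⌋ := mod_cast hcard
    rw [hcast, hdiff, abs_le]
    constructor <;>
      linarith [Int.floor_le A, Int.lt_floor_add_one A, Int.floor_le B, Int.lt_floor_add_one B]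
  simpa using (Rat.cast_le (K := ℝ)).mpr hQ

theorem exists_forall_dvd_and_dvd_mul_add_one_iff {m a b : ℕ} (hb : b ≠ 0) (hab : a.Coprime b)
    (hmb : m.Coprime b) : ∃ v, ∀ n, a ∣ n ∧ b ∣ m * n + 1 ↔ n ≡ v [MOD a * b] := by
  have : NeZero b := ⟨hb⟩
  obtain ⟨u, hu⟩ : ∃ u : ℕ, b ∣ m * u + 1 := by
    refine ⟨(-(m : ZMod b)⁻¹).val, ?_⟩
    rw [← ZMod.natCast_eq_zero_iff]
    push_cast
    rw [ZMod.natCast_zmod_val, mul_neg, ZMod.coe_mul_inv_eq_one m hmb, neg_add_cancel]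
  obtain ⟨v, hva, hvb⟩ := Nat.chineseRemainder hab 0 u
  refine ⟨v, fun n ↦ ?_⟩
  have hu0 : m * u + 1 ≡ 0 [MOD b] := Nat.modEq_zero_iff_dvd.mpr hu
  have hiff : b ∣ m * n + 1 ↔ n ≡ u [MOD b] := by
    rw [← Nat.modEq_zero_iff_dvd]
    constructor
    · intro h
      exact Nat.ModEq.cancel_left_of_coprime hmb.symm
        (Nat.ModEq.add_right_cancel' 1 (h.trans hu0.symm))
    · intro h
      exact ((h.mul_left m).add_right 1).trans hu0
  rw [← Nat.modEq_and_modEq_iff_modEq_mul hab, hiff, ← Nat.modEq_zero_iff_dvd]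
  exact and_congr ⟨fun h ↦ h.trans hva.symm, fun h ↦ h.trans hva⟩
    ⟨fun h ↦ h.trans hvb.symm, fun h ↦ h.trans hvb⟩

theorem abs_card_dvd_and_dvd_mul_add_one_sub_le {m a b : ℕ} (N : ℕ) (ha : a ≠ 0) (hb : b ≠ 0)
    (hab : a.Coprime b) (hmb : m.Coprime b) :
    |(#{n ∈ Ioc 0 N | a ∣ n ∧ b ∣ m * n + 1} : ℝ) - N / (a * b)| ≤ 1 := by
  obtain ⟨v, hv⟩ := exists_forall_dvd_and_dvd_mul_add_one_iff hb hab hmb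
  simpa [hv] using
    abs_card_Ioc_filter_modEq_sub_le N.zero_le (Nat.pos_of_ne_zero (mul_ne_zero ha hb)) v

/-- The density of the integers `n` with `p ∣ n ∨ p ∣ m * n + 1`, for `p` prime. -/
noncomputable def pairDensity (m p : ℕ) : ℝ := if p ∣ m then 1 / p else 2 / p

theorem prod_dvd_iff_forall_dvd {T : Finset ℕ} (hT : ∀ p ∈ T, p.Prime) {n : ℕ} :
    ∏ p ∈ T, p ∣ n ↔ ∀ p ∈ T, p ∣ n :=
  ⟨fun h _ hp ↦ (dvd_prod_of_mem _ hp).trans h,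
    prod_primes_dvd n fun p hp ↦ (hT p hp).prime⟩

theorem not_dvd_mul_add_one_of_dvd_left {m n p : ℕ} (hp : p.Prime) (h : p ∣ m) :
    ¬ p ∣ m * n + 1 := fun h' ↦
  hp.not_dvd_one ((Nat.dvd_add_right (h.mul_right n)).mp h')

theorem card_pair_dvd_eq_sum_powerset (m : ℕ) (A : Finset ℕ) {D : Finset ℕ}
    (hD : ∀ p ∈ D, p.Prime) :
    (#{n ∈ A | ∀ p ∈ D, p ∣ n ∨ p ∣ m * n + 1} : ℝ)
      = ∑ T ∈ D.powerset, (#{n ∈ A | ∏ p ∈ T, p ∣ n ∧ ∏ p ∈ D \ T, p ∣ m * n + 1} : ℝ) := by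
  simp_rw [← sum_boole]
  rw [sum_comm]
  refine sum_congr rfl fun n _ ↦ ?_
  have hsplit : ∀ p ∈ D, (if p ∣ n ∨ p ∣ m * n + 1 then (1 : ℝ) else 0)
      = (if p ∣ n then 1 else 0) + if p ∣ m * n + 1 then 1 else 0 := by
    intro p hp
    by_cases hpn : p ∣ n
    · have : ¬ p ∣ m * n + 1 := mul_comm n m ▸ not_dvd_mul_add_one_of_dvd_left (hD p hp) hpn
      simp [hpn, this]
    · simp [hpn]
  rw [← prod_boole, prod_congr rfl hsplit, prod_add]
  refine sum_congr rfl fun T hT ↦ ?_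
  rw [prod_boole, prod_boole, ite_zero_mul_ite_zero, one_mul]
  exact if_congr (and_congr
    (prod_dvd_iff_forall_dvd fun p hp ↦ hD p (mem_powerset.mp hT hp)).symm
    (prod_dvd_iff_forall_dvd fun p hp ↦ hD p (sdiff_subset hp)).symm) rfl rfl

theorem prod_pairDensity_eq_sum_powerset (m : ℕ) (D : Finset ℕ) :
    ∏ p ∈ D, pairDensity m p = ∑ T ∈ D.powerset,
      (∏ p ∈ T, (p : ℝ)⁻¹) * ∏ p ∈ D \ T, (if p ∣ m then 0 else (p : ℝ)⁻¹) := by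
  rw [← prod_add]
  refine prod_congr rfl fun p _ ↦ ?_
  rw [pairDensity]
  split_ifs <;> ring

theorem abs_card_dvd_and_dvd_sub_prod_le (m N : ℕ) {T U : Finset ℕ} (hTU : Disjoint T U)
    (hT : ∀ p ∈ T, p.Prime) (hU : ∀ p ∈ U, p.Prime) :
    |(#{n ∈ Ioc 0 N | ∏ p ∈ T, p ∣ n ∧ ∏ p ∈ U, p ∣ m * n + 1} : ℝ)
      - N * ((∏ p ∈ T, (p : ℝ)⁻¹) * ∏ p ∈ U, (if p ∣ m then 0 else (p : ℝ)⁻¹))| ≤ 1 := by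
  by_cases hm : ∃ p ∈ U, p ∣ m
  · obtain ⟨p, hpU, hpm⟩ := hm
    have hprod : ∏ p ∈ U, (if p ∣ m then (0 : ℝ) else (p : ℝ)⁻¹) = 0 :=
      prod_eq_zero hpU (if_pos hpm)
    have hcard : #{n ∈ Ioc 0 N | ∏ p ∈ T, p ∣ n ∧ ∏ p ∈ U, p ∣ m * n + 1} = 0 := by
      rw [card_eq_zero, filter_eq_empty_iff]
      rintro n _ ⟨-, hn⟩
      exact not_dvd_mul_add_one_of_dvd_left (hU p hpU) hpm ((dvd_prod_of_mem _ hpU).trans hn)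
    simp [hprod, hcard]
  · push Not at hm
    have hcop : (∏ p ∈ T, p).Coprime (∏ p ∈ U, p) :=
      Nat.Coprime.prod_left fun p hp ↦ Nat.Coprime.prod_right fun q hq ↦
        (Nat.coprime_primes (hT p hp) (hU q hq)).mpr (disjoint_iff_ne.mp hTU p hp q hq)
    have hcopm : m.Coprime (∏ p ∈ U, p) := Nat.Coprime.prod_right fun p hp ↦
      (((hU p hp).coprime_iff_not_dvd).mpr (hm p hp)).symm
    have hcount := abs_card_dvd_and_dvd_mul_add_one_sub_le N
      (prod_ne_zero_iff.mpr fun p hp ↦ (hT p hp).ne_zero)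
      (prod_ne_zero_iff.mpr fun p hp ↦ (hU p hp).ne_zero) hcop hcopm
    rw [prod_congr rfl fun p hp ↦ if_neg (hm p hp), prod_inv_distrib, prod_inv_distrib, ← mul_inv,
      ← div_eq_mul_inv]
    simpa only [Nat.cast_prod] using hcount

theorem abs_card_pair_dvd_sub_le (m N : ℕ) {D : Finset ℕ} (hD : ∀ p ∈ D, p.Prime) :
    |(#{n ∈ Ioc 0 N | ∀ p ∈ D, p ∣ n ∨ p ∣ m * n + 1} : ℝ) - N * ∏ p ∈ D, pairDensity m p|
      ≤ 2 ^ #D := by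
  rw [card_pair_dvd_eq_sum_powerset m _ hD, prod_pairDensity_eq_sum_powerset, mul_sum,
    ← sum_sub_distrib]
  calc _ ≤ ∑ _T ∈ D.powerset, (1 : ℝ) := (abs_sum_le_sum_abs _ _).trans <|
        sum_le_sum fun _ hT ↦ abs_card_dvd_and_dvd_sub_prod_le m N disjoint_sdiff
          (fun p hp ↦ hD p (mem_powerset.mp hT hp)) fun p hp ↦ hD p (sdiff_subset hp)
    _ = 2 ^ #D := by rw [sum_const, card_powerset, nsmul_one]; norm_cast

/-- The support of the sieve of level `z` by the elements of `P`: a squarefree modulus composed of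
primes in `P` is encoded as the set of its prime factors. -/
def sieveSupport (P : Finset ℕ) (z : ℕ) : Finset (Finset ℕ) :=
  {D ∈ P.powerset | ∏ p ∈ D, p ≤ z}

variable {P D : Finset ℕ} {m z : ℕ}

theorem mem_sieveSupport : D ∈ sieveSupport P z ↔ D ⊆ P ∧ ∏ p ∈ D, p ≤ z := by
  rw [sieveSupport, mem_filter, mem_powerset]

theorem prime_of_mem_sieveSupport (hP : ∀ p ∈ P, p.Prime) (hD : D ∈ sieveSupport P z) :
    ∀ p ∈ D, p.Prime :=
  fun p hp ↦ hP p ((mem_sieveSupport.mp hD).1 hp)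

theorem empty_mem_sieveSupport (hz : 1 ≤ z) : ∅ ∈ sieveSupport P z :=
  mem_sieveSupport.mpr ⟨empty_subset P, hz⟩

theorem isLowerSet_sieveSupport (hP : ∀ p ∈ P, p ≠ 0) :
    IsLowerSet (sieveSupport P z : Set (Finset ℕ)) := by
  intro D E hED hD
  obtain ⟨hDP, hDz⟩ := mem_sieveSupport.mp hD
  refine mem_sieveSupport.mpr ⟨subset_trans hED hDP, le_trans ?_ hDz⟩
  exact prod_le_prod_of_subset_of_one_le' hED fun p hp _ ↦
    Nat.one_le_iff_ne_zero.mpr (hP p (hDP hp))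

theorem injOn_prod_of_prime : Set.InjOn (fun D : Finset ℕ ↦ ∏ p ∈ D, p) {D | ∀ p ∈ D, p.Prime} := by
  intro D hD E hE h
  rw [← Nat.primeFactors_prod hD, ← Nat.primeFactors_prod hE]
  exact congrArg Nat.primeFactors h

theorem sum_Ioc_inv_le_one_add_log (n : ℕ) : ∑ k ∈ Ioc 0 n, (k : ℝ)⁻¹ ≤ 1 + log n := by
  simpa [harmonic_eq_sum_Icc] using! harmonic_le_one_add_log n

theorem sum_card_divisors_le (z : ℕ) :
    ∑ n ∈ Ioc 0 z, (#n.divisors : ℝ) ≤ z * (1 + log z) := by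
  have hdiv : ∑ n ∈ Ioc 0 z, (#n.divisors : ℝ) = ∑ n ∈ Ioc 0 z, ((z / n : ℕ) : ℝ) := by
    simp_rw [← ArithmeticFunction.sigma_zero_apply]
    exact mod_cast ArithmeticFunction.sum_Ioc_sigma0_eq_sum_div z
  calc ∑ n ∈ Ioc 0 z, (#n.divisors : ℝ) ≤ ∑ n ∈ Ioc 0 z, (z : ℝ) * (n : ℝ)⁻¹ := by
        rw [hdiv]
        exact sum_le_sum fun n _ ↦ Nat.cast_div_le
    _ = z * ∑ n ∈ Ioc 0 z, (n : ℝ)⁻¹ := (mul_sum ..).symm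
    _ ≤ z * (1 + log z) := by
        gcongr
        exact sum_Ioc_inv_le_one_add_log z

theorem two_pow_card_le_card_divisors_prod (hD : ∀ p ∈ D, p.Prime) :
    2 ^ #D ≤ #(∏ p ∈ D, p).divisors := by
  rw [← card_powerset]
  refine card_le_card_of_injOn (fun T ↦ ∏ p ∈ T, p) (fun T hT ↦ ?_)
    (injOn_prod_of_prime.mono fun T hT p hp ↦ hD p (mem_powerset.mp hT hp))
  exact Nat.mem_divisors.mpr ⟨prod_dvd_prod_of_subset _ _ _ (mem_powerset.mp hT),
    prod_ne_zero_iff.mpr fun p hp ↦ (hD p hp).ne_zero⟩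

theorem sum_sieveSupport_two_pow_card_le (hP : ∀ p ∈ P, p.Prime) :
    ∑ D ∈ sieveSupport P z, (2 : ℝ) ^ #D ≤ z * (1 + log z) := by
  have hprime := fun D (hD : D ∈ sieveSupport P z) ↦ prime_of_mem_sieveSupport hP hD
  calc ∑ D ∈ sieveSupport P z, (2 : ℝ) ^ #D
      ≤ ∑ D ∈ sieveSupport P z, (#(∏ p ∈ D, p).divisors : ℝ) :=
        sum_le_sum fun D hD ↦ mod_cast two_pow_card_le_card_divisors_prod (hprime D hD)
    _ = ∑ n ∈ (sieveSupport P z).image (fun D ↦ ∏ p ∈ D, p), (#n.divisors : ℝ) :=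
        (sum_image (f := fun n : ℕ ↦ (#n.divisors : ℝ)) (injOn_prod_of_prime.mono hprime)).symm
    _ ≤ ∑ n ∈ Ioc 0 z, (#n.divisors : ℝ) := by
        refine sum_le_sum_of_subset_of_nonneg ?_ fun n _ _ ↦ Nat.cast_nonneg _
        rw [image_subset_iff]
        exact fun D hD ↦ mem_Ioc.mpr
          ⟨prod_pos fun p hp ↦ (hprime D hD p hp).pos, (mem_sieveSupport.mp hD).2⟩
    _ ≤ z * (1 + log z) := sum_card_divisors_le z

theorem three_le_of_not_dvd_of_even (hm : Even m) {p : ℕ} (hp : p.Prime) (h : ¬ p ∣ m) :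
    3 ≤ p := by
  have : p ≠ 2 := fun h2 ↦ h (h2 ▸ hm.two_dvd)
  have := hp.two_le
  lia

theorem pairDensity_pos {p : ℕ} (m : ℕ) (hp : 0 < p) : 0 < pairDensity m p := by
  rw [pairDensity]
  split_ifs <;> positivity

theorem pairDensity_lt_one (hm : Even m) {p : ℕ} (hp : p.Prime) : pairDensity m p < 1 := by
  have hpos : (0 : ℝ) < p := mod_cast hp.pos
  rw [pairDensity]
  split_ifs with h
  · exact (div_lt_one hpos).mpr (mod_cast hp.one_lt)
  · exact (div_lt_one hpos).mpr (mod_cast three_le_of_not_dvd_of_even hm hp h)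

theorem odds_pairDensity_pos (hm : Even m) {p : ℕ} (hp : p.Prime) :
    0 < odds (pairDensity m) p :=
  odds_pos (pairDensity_pos m hp.pos) (pairDensity_lt_one hm hp)

theorem isSieveDensity_pairDensity (hP : ∀ p ∈ P, p.Prime) (hm : Even m) :
    IsSieveDensity (sieveSupport P z) (pairDensity m) := fun _ hD p hp ↦
  have hprime := prime_of_mem_sieveSupport hP hD p hp
  ⟨pairDensity_pos m hprime.pos, pairDensity_lt_one hm hprime⟩

theorem card_pair_sifted_le (hP : ∀ p ∈ P, p.Prime) (hm : Even m) (hz : 1 ≤ z) (N : ℕ) :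
    (#{n ∈ Ioc 0 N | ∀ p ∈ P, ¬ (p ∣ n ∨ p ∣ m * n + 1)} : ℝ)
      ≤ N / selbergSum (sieveSupport P z) (odds (pairDensity m)) + (z * (1 + log z)) ^ 2 := by
  have hprime := fun D (hD : D ∈ sieveSupport P z) ↦ prime_of_mem_sieveSupport hP hD
  have hsieve := selberg_upper_bound (isLowerSet_sieveSupport fun p hp ↦ (hP p hp).ne_zero)
    (isSieveDensity_pairDensity hP hm) (empty_mem_sieveSupport hz) (Ioc 0 N)
    (fun n p ↦ p ∣ n ∨ p ∣ m * n + 1) N (fun D ↦ 2 ^ #D) fun D₁ hD₁ D₂ hD₂ ↦ by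
      refine (abs_card_pair_dvd_sub_le m N fun p hp ↦ ?_).trans ?_
      · exact (mem_union.mp hp).elim (hprime D₁ hD₁ p) (hprime D₂ hD₂ p)
      · rw [← pow_add]
        exact pow_le_pow_right₀ one_le_two (card_union_le D₁ D₂)
  have hsubset : #{n ∈ Ioc 0 N | ∀ p ∈ P, ¬ (p ∣ n ∨ p ∣ m * n + 1)} ≤
      #{n ∈ Ioc 0 N | ∀ D ∈ sieveSupport P z, ∀ p ∈ D, ¬ (p ∣ n ∨ p ∣ m * n + 1)} :=
    card_le_card <| monotone_filter_right _ fun n _ hn D hD p hp ↦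
      hn p ((mem_sieveSupport.mp hD).1 hp)
  have hrem := pow_le_pow_left₀ (sum_nonneg fun D _ ↦ by positivity)
    (sum_sieveSupport_two_pow_card_le (z := z) hP) 2
  exact (Nat.cast_le.mpr hsubset).trans (hsieve.trans (by gcongr))

end PairSieve

section DivisorSum

theorem log_sq_sub_log_sq_le {x y : ℝ} (hx : 0 < x) (hy : 0 < y) :
    log y ^ 2 - log x ^ 2 ≤ 2 * (log y * log (y / x)) := by
  rw [log_div hy.ne' hx.ne']
  linarith [sq_nonneg (log y - log x)]

theorem log_sq_div_sub_log_sq_div_le {x a : ℝ} (ha : 0 < a) (hax : a ≤ x) :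
    log (x / a) ^ 2 - log (x / (a + 1)) ^ 2 ≤ 2 * (a⁻¹ * log (x / a)) := by
  have hx : 0 < x := ha.trans_le hax
  have hquot : x / a / (x / (a + 1)) = 1 + a⁻¹ := by field_simp
  have hlog : log (1 + a⁻¹) ≤ a⁻¹ := by
    linarith [log_le_sub_one_of_pos (show 0 < 1 + a⁻¹ by positivity)]
  have hnonneg : 0 ≤ log (x / a) := log_nonneg ((one_le_div ha).mpr hax)
  calc log (x / a) ^ 2 - log (x / (a + 1)) ^ 2
      ≤ 2 * (log (x / a) * log (x / a / (x / (a + 1)))) :=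
        log_sq_sub_log_sq_le (by positivity) (by positivity)
    _ ≤ 2 * (log (x / a) * a⁻¹) := by rw [hquot]; gcongr
    _ = 2 * (a⁻¹ * log (x / a)) := by ring

theorem log_sq_le_two_mul_sum_inv_mul_log (N : ℕ) :
    log N ^ 2 ≤ 2 * ∑ a ∈ Ioc 0 N, (a : ℝ)⁻¹ * log (N / a) := by
  rcases N.eq_zero_or_pos with rfl | hN
  · simp
  have hN0 : (N : ℝ) ≠ 0 := mod_cast hN.ne'
  calc log N ^ 2 = ∑ a ∈ Ico 1 N, (log (N / a) ^ 2 - log (N / (a + 1 : ℕ)) ^ 2) := by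
        have htele := sum_Ico_sub (fun a : ℕ ↦ -log (N / a) ^ 2) hN
        simpa [neg_add_eq_sub, hN0] using htele.symm
    _ ≤ ∑ a ∈ Ico 1 N, 2 * ((a : ℝ)⁻¹ * log (N / a)) := by
        refine sum_le_sum fun a ha ↦ ?_
        rw [mem_Ico] at ha
        push_cast
        exact log_sq_div_sub_log_sq_div_le (mod_cast ha.1) (mod_cast ha.2.le)
    _ ≤ ∑ a ∈ Ioc 0 N, 2 * ((a : ℝ)⁻¹ * log (N / a)) := by
        refine sum_le_sum_of_subset_of_nonneg (fun a ha ↦ ?_) fun a ha _ ↦ ?_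
        · rw [mem_Ico] at ha
          exact mem_Ioc.mpr ⟨ha.1, ha.2.le⟩
        · rw [mem_Ioc] at ha
          have : 0 ≤ log (N / a : ℝ) :=
            log_nonneg ((one_le_div (mod_cast ha.1)).mpr (mod_cast ha.2))
          positivity
    _ = 2 * ∑ a ∈ Ioc 0 N, (a : ℝ)⁻¹ * log (N / a) := (mul_sum ..).symm

theorem sum_card_divisors_div_eq (N : ℕ) :
    ∑ n ∈ Ioc 0 N, (#n.divisors : ℝ) / n
      = ∑ a ∈ Ioc 0 N, (a : ℝ)⁻¹ * ∑ b ∈ Ioc 0 (N / a), (b : ℝ)⁻¹ := by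
  let f : ArithmeticFunction ℝ := ⟨fun n ↦ (n : ℝ)⁻¹, by simp⟩
  have hconv : ∀ n, (#n.divisors : ℝ) / n = (f * f) n := by
    intro n
    have hterm : ∀ x ∈ n.divisorsAntidiagonal, f x.1 * f x.2 = (n : ℝ)⁻¹ := by
      intro x hx
      rw [← (Nat.mem_divisorsAntidiagonal.mp hx).1, Nat.cast_mul, mul_inv]
      rfl
    rw [ArithmeticFunction.mul_apply, sum_congr rfl hterm, sum_const, nsmul_eq_mul,
      div_eq_mul_inv, ← Nat.map_div_right_divisors, card_map]
  simp_rw [hconv]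
  exact ArithmeticFunction.sum_Ioc_mul_eq_sum_sum f f N

theorem log_sq_div_two_le_sum_card_divisors_div (N : ℕ) :
    log N ^ 2 / 2 ≤ ∑ n ∈ Ioc 0 N, (#n.divisors : ℝ) / n := by
  have hharm : ∀ a ∈ Ioc 0 N, log (N / a : ℝ) ≤ ∑ b ∈ Ioc 0 (N / a), (b : ℝ)⁻¹ := by
    intro a _
    have := log_le_harmonic_floor ((N : ℝ) / a) (by positivity)
    rw [Nat.floor_div_eq_div, harmonic_eq_sum_Icc] at this
    push_cast at this
    exact this
  have hsum : ∑ a ∈ Ioc 0 N, (a : ℝ)⁻¹ * log (N / a)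
      ≤ ∑ a ∈ Ioc 0 N, (a : ℝ)⁻¹ * ∑ b ∈ Ioc 0 (N / a), (b : ℝ)⁻¹ :=
    sum_le_sum fun a ha ↦ mul_le_mul_of_nonneg_left (hharm a ha) (by positivity)
  rw [sum_card_divisors_div_eq]
  linarith [log_sq_le_two_mul_sum_inv_mul_log N]

end DivisorSum

section DivisorEulerFactor

/-- The value of `∑ d(p ^ k) / p ^ k` over `k ≥ 1`, where `d` counts divisors: the Euler factor
at `p` of `∑ d(n) / n`, without its constant term `1`. -/
noncomputable def divisorEulerFactor (p : ℕ) : ℝ := ((p : ℝ) / (p - 1)) ^ 2 - 1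

theorem one_add_divisorEulerFactor (p : ℕ) :
    1 + divisorEulerFactor p = ((p : ℝ) / (p - 1)) ^ 2 :=
  add_sub_cancel 1 _

theorem sum_add_one_div_pow_le_divisorEulerFactor {p : ℕ} (hp : 1 < p) (K : ℕ) :
    ∑ k ∈ Ioc 0 K, ((k : ℝ) + 1) / (p : ℝ) ^ k ≤ divisorEulerFactor p := by
  have hp1 : (1 : ℝ) < p := mod_cast hp
  have hnorm : ‖(p : ℝ)⁻¹‖ < 1 := by
    rw [norm_inv, RCLike.norm_natCast]
    exact inv_lt_one_of_one_lt₀ hp1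
  have hsum := hasSum_choose_mul_geometric_of_norm_lt_one 1 hnorm
  have hvalue : (1 : ℝ) / (1 - (p : ℝ)⁻¹) ^ (1 + 1) = ((p : ℝ) / (p - 1)) ^ 2 := by
    have : (p : ℝ) - 1 ≠ 0 := by linarith
    field_simp
    rw [one_add_one_eq_two, div_pow, mul_div_cancel₀ _ (by positivity)]
  have hle := sum_le_hasSum (insert 0 (Ioc 0 K)) (fun k _ ↦ by positivity) hsum
  rw [sum_insert (by simp), hvalue] at hle
  simp only [zero_add, Nat.choose_one_right, Nat.cast_one, pow_zero, mul_one, inv_pow,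
    ← div_eq_mul_inv, Nat.cast_add] at hle
  exact le_sub_iff_add_le'.mpr hle

theorem divisorEulerFactor_nonneg {p : ℕ} (hp : 1 < p) : 0 ≤ divisorEulerFactor p := by
  simpa using sum_add_one_div_pow_le_divisorEulerFactor hp 0

theorem sum_primeFactors_eq_prod_le {F : ℕ → ℕ → ℝ} (hF : ∀ p k, 0 ≤ F p k) (z : ℕ)
    (A : Finset ℕ) :
    ∑ n ∈ Ioc 0 z with n.primeFactors = A, ∏ p ∈ A, F p (n.factorization p)
      ≤ ∏ p ∈ A, ∑ k ∈ Ioc 0 z, F p k := by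
  let exponents (n : ℕ) : (p : ℕ) → p ∈ A → ℕ := fun p _ ↦ n.factorization p
  have hinj : Set.InjOn exponents ((Ioc 0 z).filter fun n ↦ n.primeFactors = A) := by
    intro n hn n' hn' h
    simp only [coe_filter, mem_Ioc, Set.mem_ofPred_eq] at hn hn'
    refine Nat.eq_of_factorization_eq hn.1.1.ne' hn'.1.1.ne' fun p ↦ ?_
    by_cases hp : p ∈ A
    · exact congrFun (congrFun h p) hp
    · have hpn : p ∉ n.primeFactors := by rwa [hn.2]
      have hpn' : p ∉ n'.primeFactors := by rwa [hn'.2]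
      rw [← Nat.support_factorization, Finsupp.notMem_support_iff] at hpn hpn'
      rw [hpn, hpn']
  calc ∑ n ∈ Ioc 0 z with n.primeFactors = A, ∏ p ∈ A, F p (n.factorization p)
      = ∑ n ∈ Ioc 0 z with n.primeFactors = A, ∏ p ∈ A.attach, F p (exponents n p p.2) :=
        sum_congr rfl fun n _ ↦ (prod_attach A fun p ↦ F p (n.factorization p)).symm
    _ = ∑ e ∈ image exponents ((Ioc 0 z).filter fun n ↦ n.primeFactors = A),
          ∏ p ∈ A.attach, F p (e p p.2) := (sum_image (f := fun e : (p : ℕ) → p ∈ A → ℕ ↦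
            ∏ p ∈ A.attach, F p (e p p.2)) hinj).symm
    _ ≤ ∑ e ∈ A.pi fun _ ↦ Ioc 0 z, ∏ p ∈ A.attach, F p (e p p.2) := by
        refine sum_le_sum_of_subset_of_nonneg ?_ fun _ _ _ ↦ prod_nonneg fun _ _ ↦ hF _ _
        rw [image_subset_iff]
        intro n hn
        rw [mem_filter, mem_Ioc] at hn
        have hn0 : n ≠ 0 := hn.1.1.ne'
        refine mem_pi.mpr fun p hp ↦ mem_Ioc.mpr ⟨?_, ?_⟩
        · rw [← hn.2] at hp
          exact (Nat.prime_of_mem_primeFactors hp).factorization_pos_of_dvd hn0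
            (Nat.dvd_of_mem_primeFactors hp)
        · exact (Nat.factorization_lt p hn0).le.trans hn.1.2
    _ = ∏ p ∈ A, ∑ k ∈ Ioc 0 z, F p k := (prod_sum _ _ _).symm

theorem card_divisors_div_eq_prod {n : ℕ} (hn : n ≠ 0) :
    (#n.divisors : ℝ) / n
      = ∏ p ∈ n.primeFactors, ((n.factorization p : ℝ) + 1) / (p : ℝ) ^ n.factorization p := by
  have hself : (n : ℝ) = ∏ p ∈ n.primeFactors, (p : ℝ) ^ n.factorization p :=
    mod_cast (Nat.prod_factorization_pow_eq_self hn).symm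
  have hcard : (#n.divisors : ℝ) = ∏ p ∈ n.primeFactors, ((n.factorization p : ℝ) + 1) :=
    mod_cast Nat.card_divisors hn
  rw [prod_div_distrib, ← hself, ← hcard]

theorem sum_card_divisors_div_le_selbergSum (z : ℕ) :
    ∑ n ∈ Ioc 0 z, (#n.divisors : ℝ) / n
      ≤ selbergSum (sieveSupport (Nat.primesLE z) z) divisorEulerFactor := by
  have hmaps : ∀ n ∈ Ioc 0 z, n.primeFactors ∈ sieveSupport (Nat.primesLE z) z := by
    intro n hn
    rw [mem_Ioc] at hn
    refine mem_sieveSupport.mpr ⟨fun p hp ↦ Nat.mem_primesLE.mpr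
      ⟨(Nat.le_of_mem_primeFactors hp).trans hn.2, Nat.prime_of_mem_primeFactors hp⟩, ?_⟩
    exact (Nat.le_of_dvd hn.1 (Nat.prod_primeFactors_dvd n)).trans hn.2
  rw [← sum_fiberwise_of_maps_to hmaps, selbergSum]
  refine sum_le_sum fun A hA ↦ ?_
  have hprime := prime_of_mem_sieveSupport (fun p ↦ Nat.prime_of_mem_primesLE) hA
  calc ∑ n ∈ Ioc 0 z with n.primeFactors = A, (#n.divisors : ℝ) / n
      = ∑ n ∈ Ioc 0 z with n.primeFactors = A,
          ∏ p ∈ A, ((n.factorization p : ℝ) + 1) / (p : ℝ) ^ n.factorization p := by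
        refine sum_congr rfl fun n hn ↦ ?_
        rw [mem_filter, mem_Ioc] at hn
        rw [card_divisors_div_eq_prod hn.1.1.ne', hn.2]
    _ ≤ ∏ p ∈ A, ∑ k ∈ Ioc 0 z, ((k : ℝ) + 1) / (p : ℝ) ^ k :=
        sum_primeFactors_eq_prod_le (F := fun p k ↦ ((k : ℝ) + 1) / (p : ℝ) ^ k)
          (fun p k ↦ by positivity) z A
    _ ≤ ∏ p ∈ A, divisorEulerFactor p :=
        prod_le_prod (fun p _ ↦ sum_nonneg fun k _ ↦ by positivity)
          fun p hp ↦ sum_add_one_div_pow_le_divisorEulerFactor (hprime p hp).one_lt z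

theorem divisorEulerFactor_le_odds_pairDensity {m p : ℕ} (hp : 3 ≤ p) (h : ¬ p ∣ m) :
    divisorEulerFactor p ≤ odds (pairDensity m) p := by
  have hp3 : (3 : ℝ) ≤ p := mod_cast hp
  have hpos : (0 : ℝ) < p - 1 := by linarith
  have hpos' : (0 : ℝ) < p - 2 := by linarith
  have hodds : odds (pairDensity m) p = 2 / (p - 2) := by
    rw [odds, pairDensity, if_neg h]
    field_simp
  rw [hodds, divisorEulerFactor, div_pow, div_sub_one (by positivity),
    div_le_div_iff₀ (by positivity) hpos']
  nlinarith

end DivisorEulerFactor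

section SelbergSumLowerBound

variable {P D Q : Finset ℕ} {m w z : ℕ}

theorem sdiff_mem_sieveSupport (hP : ∀ p ∈ P, p ≠ 0) (hD : D ∈ sieveSupport P z) :
    D \ Q ∈ sieveSupport (P \ Q) z :=
  mem_sieveSupport.mpr ⟨sdiff_subset_sdiff (mem_sieveSupport.mp hD).1 le_rfl,
    (mem_sieveSupport.mp (isLowerSet_sieveSupport hP (sdiff_subset : D \ Q ⊆ D) hD)).2⟩

theorem mem_sieveSupport_primesLE_self :
    D ∈ sieveSupport (Nat.primesLE z) z ↔ (∀ p ∈ D, p.Prime) ∧ ∏ p ∈ D, p ≤ z := by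
  rw [mem_sieveSupport, and_congr_left_iff]
  refine fun hz ↦ ⟨fun h p hp ↦ Nat.prime_of_mem_primesLE (h hp), fun h p hp ↦ ?_⟩
  refine Nat.mem_primesLE.mpr ⟨le_trans ?_ hz, h p hp⟩
  exact Nat.le_of_dvd (prod_pos fun q hq ↦ (h q hq).pos) (dvd_prod_of_mem _ hp)

theorem log_sq_div_two_le_prod_mul_selbergSum (hQ : ∀ p ∈ Q, p.Prime) (z : ℕ) :
    log z ^ 2 / 2 ≤ (∏ p ∈ Q, (1 + divisorEulerFactor p)) *
      selbergSum (sieveSupport (Nat.primesLE z \ Q) z) divisorEulerFactor := by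
  have hprime : ∀ p ∈ Nat.primesLE z, p.Prime := fun p ↦ Nat.prime_of_mem_primesLE
  refine (log_sq_div_two_le_sum_card_divisors_div z).trans <|
    (sum_card_divisors_div_le_selbergSum z).trans <| selbergSum_le_prod_one_add_mul
      (fun p hp ↦ divisorEulerFactor_nonneg (hQ p hp).one_lt) (fun E hE p hp ↦ ?_)
      fun D hD ↦ sdiff_mem_sieveSupport (fun p hp ↦ (hprime p hp).ne_zero) hD
  exact divisorEulerFactor_nonneg
    (prime_of_mem_sieveSupport (fun q hq ↦ hprime q (sdiff_subset hq)) hE p hp).one_lt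

theorem prod_mul_selbergSum_sdiff_le {h : ℕ → ℝ} (hh : ∀ p, p.Prime → 0 ≤ h p) {z' : ℕ}
    (hwQ : Nat.primesLE w ⊆ Q) (hz : primorial w * z' ≤ z) :
    (∏ p ∈ Nat.primesLE w, (1 + h p)) * selbergSum (sieveSupport (Nat.primesLE z' \ Q) z') h
      ≤ selbergSum (sieveSupport (Nat.primesLE z) z) h := by
  have hprime : ∀ {n : ℕ}, ∀ p ∈ Nat.primesLE n, p.Prime := fun p ↦ Nat.prime_of_mem_primesLE
  refine prod_one_add_mul_selbergSum_le
    (isLowerSet_sieveSupport fun p hp ↦ (hprime p hp).ne_zero)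
    (fun D hD p hp ↦ hh p (prime_of_mem_sieveSupport hprime hD p hp)) fun F hF ↦ ?_
  obtain ⟨hFP, hFz⟩ := mem_sieveSupport.mp hF
  have hdisj : Disjoint (Nat.primesLE w) F := disjoint_sdiff.mono hwQ hFP
  refine ⟨hdisj, mem_sieveSupport_primesLE_self.mpr ⟨fun p hp ↦ ?_, ?_⟩⟩
  · exact (mem_union.mp hp).elim (hprime p) fun hpF ↦ hprime p (sdiff_subset (hFP hpF))
  · rw [prod_union hdisj, ← primorial_eq_prod_primesLE]
    exact (Nat.mul_le_mul_left _ hFz).trans hz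

/- `Q` contains the primes dividing `m` because the comparison of `odds (pairDensity m) p` with
`divisorEulerFactor p` fails there, and those up to `w` because it is too lossy there. -/
theorem prod_mul_log_sq_div_two_le {N z' : ℕ} (hm : Even m) (hm0 : m ≠ 0) (hmN : m ≤ N)
    (hwN : w ≤ N) (hz : primorial w * z' ≤ z) :
    (∏ p ∈ Nat.primesLE w, (1 + odds (pairDensity m) p)) * (log z' ^ 2 / 2)
      ≤ (∏ p ∈ Nat.primesLE N with p ≤ w ∨ p ∣ m, (1 + divisorEulerFactor p)) *
        selbergSum (sieveSupport (Nat.primesLE z) z) (odds (pairDensity m)) := by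
  set Q := {p ∈ Nat.primesLE N | p ≤ w ∨ p ∣ m}
  have hQ : ∀ p ∈ Q, p.Prime := fun p hp ↦ Nat.prime_of_mem_primesLE (mem_filter.mp hp).1
  have hwQ : Nat.primesLE w ⊆ Q := fun p hp ↦ by
    rw [Nat.mem_primesLE] at hp
    exact mem_filter.mpr ⟨Nat.mem_primesLE.mpr ⟨hp.1.trans hwN, hp.2⟩, Or.inl hp.1⟩
  have hprime : ∀ p ∈ Nat.primesLE z' \ Q, p.Prime := fun p hp ↦
    Nat.prime_of_mem_primesLE (sdiff_subset hp)
  have hndvd : ∀ p ∈ Nat.primesLE z' \ Q, ¬ p ∣ m := fun p hp hpm ↦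
    (mem_sdiff.mp hp).2 <| mem_filter.mpr ⟨Nat.mem_primesLE.mpr
      ⟨(Nat.le_of_dvd (Nat.pos_of_ne_zero hm0) hpm).trans hmN, hprime p hp⟩, Or.inr hpm⟩
  have hmono : selbergSum (sieveSupport (Nat.primesLE z' \ Q) z') divisorEulerFactor
      ≤ selbergSum (sieveSupport (Nat.primesLE z' \ Q) z') (odds (pairDensity m)) := by
    refine selbergSum_mono (fun D hD p hp ↦ ?_) fun D hD p hp ↦ ?_ <;>
    have hpP := (mem_sieveSupport.mp hD).1 hp
    · exact divisorEulerFactor_nonneg (hprime p hpP).one_lt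
    · exact divisorEulerFactor_le_odds_pairDensity
        (three_le_of_not_dvd_of_even hm (hprime p hpP) (hndvd p hpP)) (hndvd p hpP)
  have hodds : ∀ p, p.Prime → 0 ≤ odds (pairDensity m) p := fun p hp ↦
    (odds_pairDensity_pos hm hp).le
  have hprodQ : 0 ≤ ∏ p ∈ Q, (1 + divisorEulerFactor p) := prod_nonneg fun p hp ↦
    add_nonneg zero_le_one (divisorEulerFactor_nonneg (hQ p hp).one_lt)
  have hprodw : 0 ≤ ∏ p ∈ Nat.primesLE w, (1 + odds (pairDensity m) p) := prod_nonneg fun p hp ↦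
    add_nonneg zero_le_one (hodds p (Nat.prime_of_mem_primesLE hp))
  calc _ ≤ (∏ p ∈ Nat.primesLE w, (1 + odds (pairDensity m) p)) *
        ((∏ p ∈ Q, (1 + divisorEulerFactor p)) *
          selbergSum (sieveSupport (Nat.primesLE z' \ Q) z') (odds (pairDensity m))) :=
        mul_le_mul_of_nonneg_left ((log_sq_div_two_le_prod_mul_selbergSum hQ z').trans
          (mul_le_mul_of_nonneg_left hmono hprodQ)) hprodw
    _ ≤ _ := by
        rw [mul_left_comm]
        exact mul_le_mul_of_nonneg_left (prod_mul_selbergSum_sdiff_le hodds hwQ hz) hprodQ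

end SelbergSumLowerBound

section SingularSeries

theorem sum_prod_ite_dvd_mul_le {P s : Finset ℕ} {a b φ : ℕ → ℝ} {K : ℝ}
    (hP : ∀ p ∈ P, p.Prime) (ha : ∀ p ∈ P, 0 ≤ a p) (hab : ∀ p ∈ P, a p ≤ b p)
    (hφ : ∀ d, 0 < d → ∑ m ∈ s with d ∣ m, φ m ≤ K / d) :
    ∑ m ∈ s, (∏ p ∈ P, if p ∣ m then b p else a p) * φ m
      ≤ K * ∏ p ∈ P, ((b p - a p) / p + a p) := by
  have hterm : ∀ m, (∏ p ∈ P, if p ∣ m then b p else a p) * φ m = ∑ A ∈ P.powerset,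
      (∏ p ∈ A, (b p - a p)) * (∏ p ∈ P \ A, a p) * if ∏ p ∈ A, p ∣ m then φ m else 0 := by
    intro m
    have hsplit : ∀ p ∈ P,
        (if p ∣ m then b p else a p) = (if p ∣ m then b p - a p else 0) + a p := by
      intro p _
      split_ifs <;> ring
    rw [prod_congr rfl hsplit, prod_add, sum_mul]
    refine sum_congr rfl fun A hA ↦ ?_
    have hdvd := prod_dvd_iff_forall_dvd (n := m) fun p hp ↦ hP p (mem_powerset.mp hA hp)
    rw [prod_ite_zero]
    by_cases h : ∏ p ∈ A, p ∣ m
    · rw [if_pos h, if_pos (hdvd.mp h)]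
    · rw [if_neg h, if_neg (mt hdvd.mpr h)]
      ring
  have hprod : ∏ p ∈ P, ((b p - a p) / p + a p) = ∑ A ∈ P.powerset,
      (∏ p ∈ A, (b p - a p)) * (∏ p ∈ P \ A, a p) * ((∏ p ∈ A, p : ℕ) : ℝ)⁻¹ := by
    rw [prod_add]
    refine sum_congr rfl fun A _ ↦ ?_
    rw [prod_div_distrib, Nat.cast_prod]
    ring
  simp_rw [hterm]
  rw [sum_comm, hprod, mul_sum]
  refine sum_le_sum fun A hA ↦ ?_
  rw [mem_powerset] at hA
  have hcoeff : 0 ≤ (∏ p ∈ A, (b p - a p)) * ∏ p ∈ P \ A, a p :=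
    mul_nonneg (prod_nonneg fun p hp ↦ sub_nonneg.mpr (hab p (hA hp)))
      (prod_nonneg fun p hp ↦ ha p (sdiff_subset hp))
  rw [← mul_sum, ← sum_filter, mul_left_comm, ← div_eq_mul_inv]
  exact mul_le_mul_of_nonneg_left (hφ _ (prod_pos fun p hp ↦ (hP p (hA hp)).pos)) hcoeff

/-- The factor at `p` of the singular series of the pair `n, m * n + 1` if `p ≤ w`, and an upper
bound for it, independent of the sieve, if `p > w`. At `p = 2` it vanishes for odd `m`. -/
noncomputable def singularFactor (w m p : ℕ) : ℝ :=
  if p ∣ m then (if p ≤ w then p / (p - 1) else 1 + divisorEulerFactor p)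
  else (if p ≤ w then p * (p - 2) / (p - 1) ^ 2 else 1)

/-- The singular series of the pair `n, m * n + 1` truncated at `N`, with factors weakened
beyond `w`. -/
noncomputable def singularSeries (w N m : ℕ) : ℝ := ∏ p ∈ Nat.primesLE N, singularFactor w m p

variable {w N m : ℕ}

theorem singularFactor_mul_one_add_odds (hm : Even m) {p : ℕ} (hp : p.Prime) (hpw : p ≤ w) :
    singularFactor w m p * (1 + odds (pairDensity m) p) = 1 + divisorEulerFactor p := by
  have hp2 : (2 : ℝ) ≤ p := mod_cast hp.two_le
  have h1 : (p : ℝ) - 1 ≠ 0 := by linarith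
  rw [singularFactor, odds, pairDensity, one_add_divisorEulerFactor]
  split_ifs with h
  · field_simp
    ring
  · have hp3 : (3 : ℝ) ≤ p := mod_cast three_le_of_not_dvd_of_even hm hp h
    have h2 : (p : ℝ) - 2 ≠ 0 := by linarith
    field_simp
    ring

theorem singularSeries_mul_prod_one_add_odds (hm : Even m) (hwN : w ≤ N) :
    singularSeries w N m * ∏ p ∈ Nat.primesLE w, (1 + odds (pairDensity m) p)
      = ∏ p ∈ Nat.primesLE N with p ≤ w ∨ p ∣ m, (1 + divisorEulerFactor p) := by
  have hprimesLE : Nat.primesLE w = {p ∈ Nat.primesLE N | p ≤ w} := by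
    ext p
    simp only [mem_filter, Nat.mem_primesLE]
    exact ⟨fun h ↦ ⟨⟨h.1.trans hwN, h.2⟩, h.1⟩, fun h ↦ ⟨h.2, h.1.2⟩⟩
  rw [hprimesLE, prod_filter, prod_filter, singularSeries, ← prod_mul_distrib]
  refine prod_congr rfl fun p hp ↦ ?_
  by_cases hpw : p ≤ w
  · rw [if_pos hpw, if_pos (Or.inl hpw),
      singularFactor_mul_one_add_odds hm (Nat.prime_of_mem_primesLE hp) hpw]
  · simp only [singularFactor, hpw, if_false, false_or, mul_one]

theorem singularSeries_pos (hm : Even m) : 0 < singularSeries w N m := by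
  refine prod_pos fun p hp ↦ ?_
  have hprime := Nat.prime_of_mem_primesLE hp
  have hp1 : (1 : ℝ) < p := mod_cast hprime.one_lt
  have hfactor := divisorEulerFactor_nonneg hprime.one_lt
  rw [singularFactor]
  split_ifs with h
  · exact div_pos (by linarith) (by linarith)
  · linarith
  · have hp3 : (3 : ℝ) ≤ p := mod_cast three_le_of_not_dvd_of_even hm hprime h
    have : (0 : ℝ) < p - 2 := by linarith
    have : (0 : ℝ) < p - 1 := by linarith
    positivity
  · exact one_pos

theorem log_sq_div_two_le_singularSeries_mul {z z' : ℕ} (hm : Even m) (hm0 : m ≠ 0) (hmN : m ≤ N)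
    (hwN : w ≤ N) (hz : primorial w * z' ≤ z) :
    log z' ^ 2 / 2 ≤ singularSeries w N m *
      selbergSum (sieveSupport (Nat.primesLE z) z) (odds (pairDensity m)) := by
  have hpos : 0 < ∏ p ∈ Nat.primesLE w, (1 + odds (pairDensity m) p) := prod_pos fun p hp ↦
    add_pos one_pos (odds_pairDensity_pos hm (Nat.prime_of_mem_primesLE hp))
  refine le_of_mul_le_mul_left ?_ hpos
  rw [← mul_assoc, mul_comm _ (singularSeries w N m), singularSeries_mul_prod_one_add_odds hm hwN]
  exact prod_mul_log_sq_div_two_le hm hm0 hmN hwN hz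

theorem divisorEulerFactor_div_le {p : ℕ} (hp : 3 ≤ p) :
    divisorEulerFactor p / p ≤ 4 * ((p : ℝ) ^ 2)⁻¹ := by
  have hp3 : (3 : ℝ) ≤ p := mod_cast hp
  have hpos : (0 : ℝ) < p - 1 := by linarith
  rw [divisorEulerFactor, div_pow, div_sub_one (by positivity), div_div, ← div_eq_mul_inv,
    div_le_div_iff₀ (by positivity) (by positivity)]
  nlinarith [mul_nonneg (show (0 : ℝ) ≤ p - 3 by linarith) (show (0 : ℝ) ≤ 2 * p - 1 by linarith)]

theorem sum_divisorEulerFactor_div_le (hw : 2 ≤ w) (hwN : w ≤ N) :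
    ∑ p ∈ Ioc w N, divisorEulerFactor p / p ≤ 4 / w := by
  calc ∑ p ∈ Ioc w N, divisorEulerFactor p / p ≤ ∑ p ∈ Ioc w N, 4 * ((p : ℝ) ^ 2)⁻¹ :=
        sum_le_sum fun p hp ↦ divisorEulerFactor_div_le (hw.trans_lt (mem_Ioc.mp hp).1)
    _ ≤ 4 * ((w : ℝ)⁻¹ - (N : ℝ)⁻¹) := by
        rw [← mul_sum]
        gcongr
        exact sum_Ioc_inv_sq_le_sub (by lia) hwN
    _ ≤ 4 / w := by
        rw [div_eq_mul_inv]
        gcongr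
        exact sub_le_self _ (by positivity)

theorem singularFactor_eq_ite {p : ℕ} (hp : p.Prime) :
    singularFactor w m p = if p ∣ m then singularFactor w 0 p else singularFactor w 1 p := by
  simp only [singularFactor, dvd_zero, hp.not_dvd_one, if_true, if_false]

theorem singularFactor_one_nonneg {p : ℕ} (hp : p.Prime) : 0 ≤ singularFactor w 1 p := by
  have hp2 : (0 : ℝ) ≤ p - 2 := sub_nonneg.mpr (mod_cast hp.two_le)
  rw [singularFactor, if_neg hp.not_dvd_one]
  split_ifs <;> positivity

theorem singularFactor_one_le_singularFactor_zero {p : ℕ} (hp : p.Prime) :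
    singularFactor w 1 p ≤ singularFactor w 0 p := by
  have hp1 : (0 : ℝ) < p - 1 := sub_pos.mpr (mod_cast hp.one_lt)
  rw [singularFactor, if_neg hp.not_dvd_one, singularFactor, if_pos (dvd_zero p)]
  split_ifs
  · rw [div_le_div_iff₀ (by positivity) hp1]
    nlinarith [mul_nonneg p.cast_nonneg hp1.le]
  · exact le_add_of_nonneg_right (divisorEulerFactor_nonneg hp.one_lt)

theorem singularFactor_mean {p : ℕ} (hp : p.Prime) :
    (singularFactor w 0 p - singularFactor w 1 p) / p + singularFactor w 1 p
      = 1 + if p ≤ w then 0 else divisorEulerFactor p / p := by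
  have hp0 : (p : ℝ) ≠ 0 := mod_cast hp.ne_zero
  have hp1 : (p : ℝ) - 1 ≠ 0 := sub_ne_zero.mpr (mod_cast hp.ne_one)
  simp only [singularFactor, dvd_zero, hp.not_dvd_one, if_true, if_false]
  split_ifs
  · field_simp
    ring
  · ring

theorem prod_singularFactor_mean_le (hw : 2 ≤ w) (hwN : w ≤ N) :
    ∏ p ∈ Nat.primesLE N, ((singularFactor w 0 p - singularFactor w 1 p) / p + singularFactor w 1 p)
      ≤ exp (4 / w) := by
  have hsubset : {p ∈ Nat.primesLE N | ¬p ≤ w} ⊆ Ioc w N := fun p hp ↦ by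
    rw [mem_filter, not_le] at hp
    exact mem_Ioc.mpr ⟨hp.2, Nat.le_of_mem_primesLE hp.1⟩
  have hnonneg : ∀ p ∈ Ioc w N, 0 ≤ divisorEulerFactor p / p := fun p hp ↦
    div_nonneg (divisorEulerFactor_nonneg (by grind)) p.cast_nonneg
  calc _ = ∏ p ∈ Nat.primesLE N, (1 + if p ≤ w then 0 else divisorEulerFactor p / p) :=
        prod_congr rfl fun p hp ↦ singularFactor_mean (Nat.prime_of_mem_primesLE hp)
    _ = ∏ p ∈ Nat.primesLE N with ¬p ≤ w, (1 + divisorEulerFactor p / p) := by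
        rw [prod_filter]
        refine prod_congr rfl fun p _ ↦ ?_
        split_ifs <;> ring
    _ ≤ ∏ p ∈ Ioc w N, (1 + divisorEulerFactor p / p) :=
        prod_le_prod_of_subset_of_one_le hsubset
          (fun p hp ↦ add_nonneg zero_le_one (hnonneg p (hsubset hp)))
          fun p hp _ ↦ le_add_of_nonneg_right (hnonneg p hp)
    _ ≤ exp (∑ p ∈ Ioc w N, divisorEulerFactor p / p) := by
        rw [exp_sum]
        exact prod_le_prod (fun p hp ↦ add_nonneg zero_le_one (hnonneg p hp))
          fun p _ ↦ (add_comm _ _).trans_le (add_one_le_exp _)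
    _ ≤ exp (4 / w) := exp_le_exp.mpr (sum_divisorEulerFactor_div_le hw hwN)

theorem sum_singularSeries_mul_le {s : Finset ℕ} {φ : ℕ → ℝ} {K : ℝ} (hw : 2 ≤ w) (hwN : w ≤ N)
    (hK : 0 ≤ K) (hφ : ∀ d, 0 < d → ∑ m ∈ s with d ∣ m, φ m ≤ K / d) :
    ∑ m ∈ s, singularSeries w N m * φ m ≤ K * exp (4 / w) := by
  have hprime : ∀ p ∈ Nat.primesLE N, p.Prime := fun p ↦ Nat.prime_of_mem_primesLE
  calc ∑ m ∈ s, singularSeries w N m * φ m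
      = ∑ m ∈ s, (∏ p ∈ Nat.primesLE N,
          if p ∣ m then singularFactor w 0 p else singularFactor w 1 p) * φ m := by
        refine sum_congr rfl fun m _ ↦ ?_
        rw [singularSeries, prod_congr rfl fun p hp ↦ singularFactor_eq_ite (hprime p hp)]
    _ ≤ K * ∏ p ∈ Nat.primesLE N,
          ((singularFactor w 0 p - singularFactor w 1 p) / p + singularFactor w 1 p) :=
        sum_prod_ite_dvd_mul_le hprime (fun p hp ↦ singularFactor_one_nonneg (hprime p hp))
          (fun p hp ↦ singularFactor_one_le_singularFactor_zero (hprime p hp)) hφ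
    _ ≤ K * exp (4 / w) := mul_le_mul_of_nonneg_left (prod_singularFactor_mean_le hw hwN) hK

end SingularSeries

section HarmonicSum

/- The right-hand side is the integral of `1 / (v * log (x / v) ^ 2)` over `[s, t]`, and the
integrand is decreasing in `v` as long as `log (x / v) ≥ 2`. -/
theorem sub_div_mul_log_sq_le {x s t : ℝ} (hx : 0 < x) (hs : 0 < s) (hst : s ≤ t)
    (ht : 2 ≤ log (x / t)) :
    (t - s) / (t * log (x / t) ^ 2) ≤ (log (x / t))⁻¹ - (log (x / s))⁻¹ := by
  have ht0 : 0 < t := hs.trans_le hst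
  set u := log (x / t) with hu
  set r := log (t / s) with hr
  have hlog : log (x / s) = u + r := by
    rw [hu, hr, log_div hx.ne' hs.ne', log_div hx.ne' ht0.ne', log_div ht0.ne' hs.ne']
    ring
  have hr0 : 0 ≤ r := log_nonneg ((one_le_div hs).mpr hst)
  have hlower : 2 * (t - s) ≤ r * (t + s) := by
    have h := le_log_one_add_of_nonneg (x := t / s - 1) (sub_nonneg.mpr ((one_le_div hs).mpr hst))
    rw [add_sub_cancel, ← hr, div_le_iff₀ (by linarith [(one_le_div hs).mpr hst])] at h
    calc 2 * (t - s) = 2 * (t / s - 1) * s := by field_simp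
      _ ≤ r * (t / s - 1 + 2) * s := by gcongr
      _ = r * (t + s) := by
        field_simp
        ring
  have hmul : (t - s) * (u + r) ≤ r * u * t := by
    nlinarith [mul_nonneg (sub_nonneg.mpr ht) (show 0 ≤ r * t - (t - s) by nlinarith)]
  calc (t - s) / (t * u ^ 2) = (t - s) * (u + r) / (t * u ^ 2 * (u + r)) := by field_simp
    _ ≤ r * u * t / (t * u ^ 2 * (u + r)) := by gcongr
    _ = u⁻¹ - (log (x / s))⁻¹ := by
      rw [hlog]
      field_simp
      ring

theorem sum_Ioc_inv_mul_log_sq_le {y : ℝ} {J : ℕ} (hy : 0 < y) (hJ : 1 ≤ J)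
    (hlog : 2 ≤ log (y / J)) :
    ∑ j ∈ Ioc 0 J, ((j : ℝ) * log (y / j) ^ 2)⁻¹
      ≤ (log y ^ 2)⁻¹ + (log (y / J))⁻¹ - (log y)⁻¹ := by
  induction J, hJ using Nat.le_induction with
  | base => simp
  | succ J hJ ih =>
    have hJ0 : (0 : ℝ) < J := mod_cast hJ
    have hle : (J : ℝ) ≤ (J + 1 : ℕ) := mod_cast J.le_succ
    have hprev := ih (hlog.trans (log_le_log (by positivity) (by gcongr)))
    have hstep := sub_div_mul_log_sq_le hy hJ0 hle hlog
    rw [show ((J + 1 : ℕ) : ℝ) - J = 1 by push_cast; ring, one_div] at hstep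
    rw [sum_Ioc_succ_top J.zero_le]
    linarith

theorem sum_Ioc_filter_dvd {α : Type*} [AddCommMonoid α] (f : ℕ → α) (M : ℕ) {d : ℕ} (hd : 0 < d) :
    ∑ m ∈ Ioc 0 M with d ∣ m, f m = ∑ j ∈ Ioc 0 (M / d), f (d * j) := by
  refine (sum_nbij (d * ·) (fun j hj ↦ ?_) (fun a _ b _ h ↦ Nat.eq_of_mul_eq_mul_left hd h)
    (fun m hm ↦ ?_) fun _ _ ↦ rfl).symm
  · rw [mem_Ioc, Nat.le_div_iff_mul_le hd, mul_comm j d] at hj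
    exact mem_filter.mpr ⟨mem_Ioc.mpr ⟨Nat.mul_pos hd hj.1, hj.2⟩, dvd_mul_right d j⟩
  · rw [mem_coe, mem_filter, mem_Ioc] at hm
    obtain ⟨⟨hpos, hle⟩, j, rfl⟩ := hm
    refine ⟨j, ?_, rfl⟩
    rw [mem_coe, mem_Ioc, Nat.le_div_iff_mul_le hd, mul_comm j d]
    exact ⟨Nat.pos_of_mul_pos_left hpos, hle⟩

theorem sum_Ioc_filter_dvd_inv_mul_log_sq_le {x U : ℝ} {M d : ℕ} (hx : 0 < x) (hU : 2 ≤ U)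
    (hM : U ≤ log (x / M)) (hd : 0 < d) :
    ∑ m ∈ Ioc 0 M with d ∣ m, ((m : ℝ) * log (x / m) ^ 2)⁻¹
      ≤ ((U ^ 2)⁻¹ + U⁻¹ - (log x)⁻¹) / d := by
  have hlog : ∀ m : ℕ, 0 < m → m ≤ M → U ≤ log (x / m) := fun m hm hmM ↦
    hM.trans (log_le_log (div_pos hx (mod_cast hm.trans_le hmM)) (by gcongr))
  have hM0 : 0 < M := by
    rw [Nat.pos_iff_ne_zero]
    rintro rfl
    rw [Nat.cast_zero, div_zero, log_zero] at hM
    linarith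
  have hxU : U ≤ log x := by simpa using hlog 1 one_pos hM0
  rw [sum_Ioc_filter_dvd _ _ hd, le_div_iff₀ (by positivity), sum_mul]
  rcases Nat.eq_zero_or_pos (M / d) with h0 | hJ
  · rw [h0, Ioc_self, sum_empty]
    have : (log x)⁻¹ ≤ U⁻¹ := inv_anti₀ (by linarith) hxU
    have : 0 ≤ (U ^ 2)⁻¹ := by positivity
    linarith
  have hdJ : d * (M / d) ≤ M := Nat.mul_div_le M d
  have hlogd : U ≤ log (x / d) := hlog d hd ((Nat.le_mul_of_pos_right d hJ).trans hdJ)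
  have hlogJ : U ≤ log (x / d / (M / d : ℕ)) := by
    rw [div_div, ← Nat.cast_mul]
    exact hlog _ (Nat.mul_pos hd hJ) hdJ
  calc ∑ j ∈ Ioc 0 (M / d), (((d * j : ℕ) : ℝ) * log (x / (d * j : ℕ)) ^ 2)⁻¹ * d
      = ∑ j ∈ Ioc 0 (M / d), ((j : ℝ) * log (x / d / j) ^ 2)⁻¹ := by
        refine sum_congr rfl fun j _ ↦ ?_
        rw [div_div, ← Nat.cast_mul, Nat.cast_mul, mul_assoc, mul_inv, mul_right_comm,
          inv_mul_cancel₀ (by positivity), one_mul]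
    _ ≤ (log (x / d) ^ 2)⁻¹ + (log (x / d / (M / d : ℕ)))⁻¹ - (log (x / d))⁻¹ :=
        sum_Ioc_inv_mul_log_sq_le (by positivity) hJ (hU.trans hlogJ)
    _ ≤ (U ^ 2)⁻¹ + U⁻¹ - (log x)⁻¹ := by
        have : 0 < log (x / d) := by linarith
        gcongr
        exact div_le_self hx.le (mod_cast hd)

end HarmonicSum

section Reduction

theorem Pplus_mem_primeFactors {n : ℕ} (hn : 2 ≤ n) : Pplus n ∈ n.primeFactors := by
  rw [Pplus, if_neg (by lia)]
  simpa only [Set.image_id, mem_coe] using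
    sup_mem_of_nonempty (f := id) (Nat.nonempty_primeFactors.mpr hn)

theorem exists_even_mul_Pplus_add_one_eq {p : ℕ} (hp : p.Prime) (hlarge : 2 < Pplus (p - 1)) :
    ∃ m ≠ 0, Even m ∧ (Pplus (p - 1)).Prime ∧ m * Pplus (p - 1) + 1 = p := by
  have hp2 : 2 ≤ p - 1 := by
    by_contra! h
    have hp1 : p - 1 = 1 := by have := hp.two_le; lia
    rw [hp1, Pplus, if_pos rfl] at hlarge
    lia
  have hq := Pplus_mem_primeFactors hp2
  have hqprime := Nat.prime_of_mem_primeFactors hq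
  obtain ⟨m, hm⟩ := Nat.dvd_of_mem_primeFactors hq
  have heq : m * Pplus (p - 1) + 1 = p := by
    rw [mul_comm, ← hm]
    lia
  refine ⟨m, ?_, ?_, hqprime, heq⟩
  · rintro rfl
    lia
  · have hqodd : ¬ Even (Pplus (p - 1)) :=
      Nat.not_even_iff_odd.mpr (hqprime.odd_of_ne_two hlarge.ne')
    have hpeven : Even (m * Pplus (p - 1)) :=
      mul_comm _ m ▸ hm ▸ hp.even_sub_one (by lia)
    exact (Nat.even_mul.mp hpeven).resolve_right hqodd

/-- The integers `1 ≤ n ≤ N` such that neither `n` nor `m * n + 1` has a prime factor `p ≤ z`. -/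
def siftedPairs (m N z : ℕ) : Finset ℕ :=
  {n ∈ Ioc 0 N | ∀ p ∈ Nat.primesLE z, ¬ (p ∣ n ∨ p ∣ m * n + 1)}

theorem mem_siftedPairs_of_prime {m N z q : ℕ} (hm : m ≠ 0) (hq : q.Prime)
    (hp : (m * q + 1).Prime) (hqN : q ≤ N) (hzq : z < q) : q ∈ siftedPairs m N z := by
  have hqp : q < m * q + 1 := Nat.lt_succ_of_le (Nat.le_mul_of_pos_left q (Nat.pos_of_ne_zero hm))
  refine mem_filter.mpr ⟨mem_Ioc.mpr ⟨hq.pos, hqN⟩, fun r hr hdvd ↦ ?_⟩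
  have hrq : r < q := (Nat.le_of_mem_primesLE hr).trans_lt hzq
  rcases hdvd with h | h
  · exact hrq.ne ((Nat.prime_dvd_prime_iff_eq (Nat.prime_of_mem_primesLE hr) hq).mp h)
  · exact (hrq.trans hqp).ne ((Nat.prime_dvd_prime_iff_eq (Nat.prime_of_mem_primesLE hr) hp).mp h)

theorem T'_le_sum_card_siftedPairs {c x : ℝ} (hx : 0 < x) (hxc : 2 < x ^ c) {z : ℕ → ℕ}
    (hz : ∀ m ≠ 0, (z m : ℝ) < x ^ c) :
    T' c x ≤ ∑ m ∈ Ioc 0 ⌊x ^ (1 - c)⌋₊ with Even m, #(siftedPairs m ⌊x / m⌋₊ (z m)) := by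
  let pairs (m : ℕ) : Finset ℕ := (siftedPairs m ⌊x / m⌋₊ (z m)).image (m * · + 1)
  have hsubset : {p ∈ range (⌊x⌋₊ + 1) | p.Prime ∧ x ^ c ≤ (Pplus (p - 1) : ℝ)}
      ⊆ {m ∈ Ioc 0 ⌊x ^ (1 - c)⌋₊ | Even m}.biUnion pairs := by
    intro p hp
    obtain ⟨hpx, hprime, hPplus⟩ := mem_filter.mp hp
    obtain ⟨m, hm0, hm, hq, hpm⟩ :=
      exists_even_mul_Pplus_add_one_eq hprime (mod_cast hxc.trans_le hPplus)
    set q := Pplus (p - 1)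
    have hmpos : (0 : ℝ) < m := by positivity
    have hmq : (m : ℝ) * q ≤ x := by
      have : (p : ℝ) ≤ x := (Nat.le_floor_iff hx.le).mp (Nat.lt_succ_iff.mp (mem_range.mp hpx))
      rw [← hpm] at this
      push_cast at this
      linarith
    have hmM : m ≤ ⌊x ^ (1 - c)⌋₊ := by
      rw [Nat.le_floor_iff (by positivity), rpow_sub hx, rpow_one, le_div_iff₀ (by positivity)]
      exact (mul_le_mul_of_nonneg_left hPplus hmpos.le).trans hmq
    refine mem_biUnion.mpr ⟨m, mem_filter.mpr ⟨mem_Ioc.mpr ⟨Nat.pos_of_ne_zero hm0, hmM⟩, hm⟩,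
      mem_image.mpr ⟨q, mem_siftedPairs_of_prime hm0 hq (hpm ▸ hprime) ?_ ?_, hpm⟩⟩
    · exact Nat.le_floor ((le_div_iff₀' hmpos).mpr hmq)
    · exact_mod_cast (hz m hm0).trans_le hPplus
  calc T' c x ≤ #({m ∈ Ioc 0 ⌊x ^ (1 - c)⌋₊ | Even m}.biUnion pairs) := card_le_card hsubset
    _ ≤ ∑ m ∈ Ioc 0 ⌊x ^ (1 - c)⌋₊ with Even m, #(pairs m) := card_biUnion_le
    _ ≤ _ := sum_le_sum fun m _ ↦ card_image_le

end Reduction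

section Asymptotics

open Filter Topology

theorem eventually_rpow_le_floor_rpow_div {a b : ℝ} (ha : 0 ≤ a) (hab : a < b) {W : ℕ}
    (hW : 0 < W) : ∀ᶠ y : ℝ in atTop, y ^ a ≤ (⌊y ^ b⌋₊ / W : ℕ) := by
  filter_upwards [(tendsto_rpow_atTop (sub_pos.mpr hab)).eventually_ge_atTop (2 * (W : ℝ)),
    eventually_ge_atTop 1] with y hlarge hy
  have hya : 1 ≤ y ^ a := one_le_rpow hy ha
  have hyb : y ^ b = y ^ a * y ^ (b - a) := by rw [← rpow_add (by positivity), add_sub_cancel]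
  have htwice : 2 * y ^ a ≤ y ^ b / W := by
    rw [le_div_iff₀ (by positivity), hyb]
    nlinarith
  have hfloor := Nat.lt_floor_add_one (y ^ b / W)
  rw [Nat.floor_div_natCast] at hfloor
  linarith

theorem floor_div_selbergSum_le {δ y : ℝ} {m w N z : ℕ} (hm : Even m) (hm0 : m ≠ 0) (hmN : m ≤ N)
    (hwN : w ≤ N) (hδ : δ < 1 / 4) (hy : 1 < y)
    (hlevel : y ^ (1 / 2 - 2 * δ) ≤ (z / primorial w : ℕ)) :
    ⌊y⌋₊ / selbergSum (sieveSupport (Nat.primesLE z) z) (odds (pairDensity m))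
      ≤ 8 / (1 - 4 * δ) ^ 2 * (singularSeries w N m * (y / log y ^ 2)) := by
  set S := selbergSum (sieveSupport (Nat.primesLE z) z) (odds (pairDensity m))
  have hy0 : 0 < y := by linarith
  have hlogy : 0 < log y := log_pos hy
  have hδ4 : 0 < 1 - 4 * δ := by linarith
  have hhalf : 0 < 1 / 2 - 2 * δ := by linarith
  have hloglevel : (1 / 2 - 2 * δ) * log y ≤ log (z / primorial w : ℕ) := by
    rw [← log_rpow hy0]
    exact log_le_log (by positivity) hlevel
  have hlower : ((1 / 2 - 2 * δ) * log y) ^ 2 / 2 ≤ singularSeries w N m * S :=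
    le_trans (by gcongr)
      (log_sq_div_two_le_singularSeries_mul hm hm0 hmN hwN (Nat.mul_div_le z (primorial w)))
  have hSpos : 0 < S := by
    refine pos_of_mul_pos_right (lt_of_lt_of_le ?_ hlower) (singularSeries_pos hm).le
    positivity
  rw [div_le_iff₀ hSpos]
  calc (⌊y⌋₊ : ℝ) ≤ y := Nat.floor_le hy0.le
    _ = 8 / (1 - 4 * δ) ^ 2 * (y / log y ^ 2) * (((1 / 2 - 2 * δ) * log y) ^ 2 / 2) := by
      field_simp
      ring
    _ ≤ 8 / (1 - 4 * δ) ^ 2 * (y / log y ^ 2) * (singularSeries w N m * S) := by gcongr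
    _ = _ := by ring

theorem card_siftedPairs_le {δ y : ℝ} {m w N : ℕ} (hm : Even m) (hm0 : m ≠ 0) (hmN : m ≤ N)
    (hwN : w ≤ N) (hδ : 0 ≤ δ) (hδ' : δ < 1 / 4) (hy : 1 < y)
    (hlevel : y ^ (1 / 2 - 2 * δ) ≤ (⌊y ^ (1 / 2 - δ)⌋₊ / primorial w : ℕ)) :
    (#(siftedPairs m ⌊y⌋₊ ⌊y ^ (1 / 2 - δ)⌋₊) : ℝ)
      ≤ 8 / (1 - 4 * δ) ^ 2 * (singularSeries w N m * (y / log y ^ 2))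
        + y ^ (1 - 2 * δ) * (1 + log y) ^ 2 := by
  set z := ⌊y ^ (1 / 2 - δ)⌋₊
  have hy0 : 0 < y := by linarith
  have hz1 : 1 ≤ z := Nat.le_floor (by simpa using one_le_rpow hy.le (by linarith))
  have hz1' : (1 : ℝ) ≤ z := mod_cast hz1
  have hzy : (z : ℝ) ≤ y ^ (1 / 2 - δ) := Nat.floor_le (by positivity)
  have hlogz : log z ≤ log y := log_le_log (by linarith)
    (hzy.trans (rpow_le_self_of_one_le hy.le (by linarith)))
  have herror : (z * (1 + log z)) ^ 2 ≤ y ^ (1 - 2 * δ) * (1 + log y) ^ 2 := by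
    have hsq : y ^ (1 - 2 * δ) = (y ^ (1 / 2 - δ)) ^ 2 := by
      rw [← rpow_mul_natCast hy0.le]
      congr 1
      push_cast
      ring
    rw [hsq, mul_pow]
    have := log_nonneg hz1'
    gcongr
  exact (card_pair_sifted_le (fun p hp ↦ Nat.prime_of_mem_primesLE hp) hm hz1 _).trans
    (add_le_add (floor_div_selbergSum_le hm hm0 hmN hwN hδ' hy hlevel) herror)

theorem rpow_le_div_of_le_floor {c x : ℝ} {m : ℕ} (hx : 0 < x) (hm0 : 0 < m)
    (hm : m ≤ ⌊x ^ (1 - c)⌋₊) : x ^ c ≤ x / m := by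
  have hle : (m : ℝ) ≤ x ^ (1 - c) := (Nat.le_floor_iff (by positivity)).mp hm
  rw [rpow_sub hx, rpow_one, le_div_iff₀ (by positivity)] at hle
  rwa [le_div_iff₀' (by positivity)]

theorem floor_div_rpow_lt_rpow {a c x : ℝ} {m : ℕ} (hx : 1 < x) (ha : 0 ≤ a) (hac : a < c)
    (hm : m ≠ 0) : (⌊(x / m) ^ a⌋₊ : ℝ) < x ^ c := by
  have hx0 : 0 < x := by linarith
  have hle : x / m ≤ x := div_le_self hx0.le (mod_cast Nat.one_le_iff_ne_zero.mpr hm)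
  calc (⌊(x / m) ^ a⌋₊ : ℝ) ≤ (x / m) ^ a := Nat.floor_le (by positivity)
    _ ≤ x ^ a := by gcongr
    _ < x ^ c := rpow_lt_rpow_of_exponent_lt hx hac

theorem sum_singularSeries_mul_div_log_sq_le {c x : ℝ} {w N : ℕ} (hc0 : 0 < c) (hc1 : c ≤ 1)
    (hx : 1 < x) (hcx : 2 ≤ c * log x) (hw : 2 ≤ w) (hwN : w ≤ N) :
    ∑ m ∈ Ioc 0 ⌊x ^ (1 - c)⌋₊ with Even m, singularSeries w N m * (x / m / log (x / m) ^ 2)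
      ≤ x * ((((c * log x) ^ 2)⁻¹ + (c * log x)⁻¹ - (log x)⁻¹) * exp (4 / w)) := by
  have hx0 : 0 < x := by linarith
  have hlogx : 0 < log x := log_pos hx
  have hM0 : 0 < ⌊x ^ (1 - c)⌋₊ := Nat.floor_pos.mpr (one_le_rpow hx.le (by linarith))
  have hM : c * log x ≤ log (x / ⌊x ^ (1 - c)⌋₊) := by
    rw [← log_rpow hx0]
    exact log_le_log (by positivity) (rpow_le_div_of_le_floor hx0 hM0 le_rfl)
  have hK : 0 ≤ ((c * log x) ^ 2)⁻¹ + (c * log x)⁻¹ - (log x)⁻¹ := by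
    have : (log x)⁻¹ ≤ (c * log x)⁻¹ :=
      inv_anti₀ (by positivity) (mul_le_of_le_one_left hlogx.le hc1)
    have : 0 ≤ ((c * log x) ^ 2)⁻¹ := by positivity
    linarith
  calc _ = x * ∑ m ∈ Ioc 0 ⌊x ^ (1 - c)⌋₊ with Even m,
        singularSeries w N m * ((m : ℝ) * log (x / m) ^ 2)⁻¹ := by
        rw [mul_sum]
        refine sum_congr rfl fun m _ ↦ ?_
        rw [div_div, div_eq_mul_inv]
        ring
    _ ≤ _ := by
        refine mul_le_mul_of_nonneg_left (sum_singularSeries_mul_le hw hwN hK fun d hd ↦ ?_) hx0.le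
        exact (sum_le_sum_of_subset_of_nonneg (filter_subset_filter _ (filter_subset _ _))
          fun m _ _ ↦ by positivity).trans (sum_Ioc_filter_dvd_inv_mul_log_sq_le hx0 hcx hM hd)

theorem sum_div_rpow_mul_one_add_log_sq_le {c s x : ℝ} (hc0 : 0 ≤ c) (hc1 : c ≤ 1) (hs : 0 ≤ s)
    (hx : 1 ≤ x) :
    ∑ m ∈ Ioc 0 ⌊x ^ (1 - c)⌋₊ with Even m, (x / m) ^ (1 - s) * (1 + log (x / m)) ^ 2
      ≤ x ^ (1 - c * s) * (1 + log x) ^ 3 := by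
  have hx0 : 0 < x := by linarith
  set M := ⌊x ^ (1 - c)⌋₊
  have hterm : ∀ m ∈ Ioc 0 M, (x / m) ^ (1 - s) * (1 + log (x / m)) ^ 2
      ≤ x ^ (1 - c * s) * (1 + log x) ^ 2 * (m : ℝ)⁻¹ := by
    intro m hm
    rw [mem_Ioc] at hm
    have hm1 : (1 : ℝ) ≤ m := mod_cast hm.1
    have hle := rpow_le_div_of_le_floor hx0 hm.1 hm.2
    have hone : 1 ≤ x / m := (one_le_rpow hx hc0).trans hle
    have hlog : log (x / m) ≤ log x := log_le_log (by positivity) (div_le_self hx0.le hm1)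
    have hlog0 : 0 ≤ log (x / m) := log_nonneg hone
    calc (x / m) ^ (1 - s) * (1 + log (x / m)) ^ 2
        = x / m * (x / m) ^ (-s) * (1 + log (x / m)) ^ 2 := by
          rw [sub_eq_add_neg, rpow_add (by positivity), rpow_one]
      _ ≤ x / m * (x ^ c) ^ (-s) * (1 + log x) ^ 2 := by
          gcongr x / m * ?_ * (1 + ?_) ^ 2
          exact rpow_le_rpow_of_nonpos (by positivity) hle (by linarith)
      _ = x ^ (1 - c * s) * (1 + log x) ^ 2 * (m : ℝ)⁻¹ := by
          rw [← rpow_mul hx0.le, sub_eq_add_neg, rpow_add hx0, rpow_one, mul_neg]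
          ring
  have hlogM : 1 + log M ≤ 1 + log x := by
    have hMx : (M : ℝ) ≤ x := (Nat.floor_le (by positivity)).trans
      (rpow_le_self_of_one_le hx (by linarith))
    have hM0 : 0 < M := Nat.floor_pos.mpr (one_le_rpow hx (by linarith))
    gcongr
  have hlogx : 0 ≤ log x := log_nonneg hx
  calc _ ≤ ∑ m ∈ Ioc 0 M, x ^ (1 - c * s) * (1 + log x) ^ 2 * (m : ℝ)⁻¹ :=
        (sum_le_sum fun m hm ↦ hterm m (mem_of_mem_filter m hm)).trans
          (sum_le_sum_of_subset_of_nonneg (filter_subset _ _) fun m _ _ ↦ by positivity)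
    _ = x ^ (1 - c * s) * (1 + log x) ^ 2 * ∑ m ∈ Ioc 0 M, (m : ℝ)⁻¹ := (mul_sum _ _ _).symm
    _ ≤ x ^ (1 - c * s) * (1 + log x) ^ 2 * (1 + log x) := by
        gcongr
        exact (sum_Ioc_inv_le_one_add_log M).trans hlogM
    _ = x ^ (1 - c * s) * (1 + log x) ^ 3 := by ring

theorem eventually_T'_le {c δ : ℝ} {w : ℕ} (hc : 1 / 2 ≤ c) (hc1 : c ≤ 1) (hδ : 0 < δ)
    (hδ' : δ < 1 / 4) (hw : 2 ≤ w) : ∀ᶠ x : ℝ in atTop, (T' c x : ℝ) ≤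
      8 / (1 - 4 * δ) ^ 2 *
          (x * ((((c * log x) ^ 2)⁻¹ + (c * log x)⁻¹ - (log x)⁻¹) * exp (4 / w)))
        + x ^ (1 - c * (2 * δ)) * (1 + log x) ^ 3 := by
  have hc0 : 0 < c := by linarith
  have hrpow := tendsto_rpow_atTop hc0
  filter_upwards [hrpow.eventually_gt_atTop 2, eventually_gt_atTop 1,
    tendsto_log_atTop.const_mul_atTop hc0 |>.eventually_ge_atTop 2,
    hrpow.eventually (eventually_forall_ge_atTop.mpr (eventually_rpow_le_floor_rpow_div
      (by linarith) (by linarith : 1 / 2 - 2 * δ < 1 / 2 - δ) (primorial_pos w)))]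
    with x hxc hx hlogx hlevel
  have hx0 : 0 < x := by linarith
  set M := ⌊x ^ (1 - c)⌋₊
  have hz : ∀ m : ℕ, m ≠ 0 → (⌊(x / m) ^ (1 / 2 - δ)⌋₊ : ℝ) < x ^ c := fun m hm ↦
    floor_div_rpow_lt_rpow hx (by linarith) (by linarith) hm
  have hcard : ∀ m ∈ {m ∈ Ioc 0 M | Even m},
      (#(siftedPairs m ⌊x / m⌋₊ ⌊(x / m) ^ (1 / 2 - δ)⌋₊) : ℝ)
        ≤ 8 / (1 - 4 * δ) ^ 2 * (singularSeries w (max w M) m * (x / m / log (x / m) ^ 2))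
          + (x / m) ^ (1 - 2 * δ) * (1 + log (x / m)) ^ 2 := by
    intro m hm
    obtain ⟨hmM, heven⟩ := mem_filter.mp hm
    rw [mem_Ioc] at hmM
    have hle := rpow_le_div_of_le_floor hx0 hmM.1 hmM.2
    exact card_siftedPairs_le heven hmM.1.ne' (hmM.2.trans (le_max_right w M)) (le_max_left w M)
      hδ.le hδ' (by linarith) (hlevel _ hle)
  calc (T' c x : ℝ)
      ≤ ∑ m ∈ Ioc 0 M with Even m, (#(siftedPairs m ⌊x / m⌋₊ ⌊(x / m) ^ (1 / 2 - δ)⌋₊) : ℝ) :=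
        mod_cast T'_le_sum_card_siftedPairs hx0 hxc hz
    _ ≤ _ := sum_le_sum hcard
    _ ≤ _ := by
        rw [sum_add_distrib, ← mul_sum]
        exact add_le_add (mul_le_mul_of_nonneg_left (sum_singularSeries_mul_div_log_sq_le
            hc0 hc1 hx hlogx hw (le_max_left w M)) (by positivity))
          (sum_div_rpow_mul_one_add_log_sq_le hc0.le hc1 (by positivity) hx.le)

theorem tendsto_rpow_neg_mul_log_mul_log {s : ℝ} (hs : 0 < s) :
    Tendsto (fun x ↦ x ^ (-s) * (1 + log x) ^ 3 * log x) atTop (𝓝 0) := by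
  have hpow : ∀ k : ℕ, Tendsto (fun x ↦ log x ^ k / x ^ s) atTop (𝓝 0) := fun k ↦ by
    simpa only [rpow_natCast] using (isLittleO_log_rpow_rpow_atTop k hs).tendsto_div_nhds_zero
  have hsum := (((hpow 1).add ((hpow 2).const_mul 3)).add ((hpow 3).const_mul 3)).add (hpow 4)
  simp only [mul_zero, add_zero] at hsum
  refine hsum.congr' ?_
  filter_upwards [eventually_gt_atTop 0] with x hx
  rw [rpow_neg hx.le]
  ring

theorem tendsto_main_add_error {c s A : ℝ} (hc : 0 < c) (hs : 0 < s) :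
    Tendsto (fun x ↦ (A * (x * (((c * log x) ^ 2)⁻¹ + (c * log x)⁻¹ - (log x)⁻¹))
      + x ^ (1 - s) * (1 + log x) ^ 3) / (x / log x)) atTop (𝓝 (A * (1 / c - 1))) := by
  have hinv : Tendsto (fun x ↦ (c ^ 2)⁻¹ * (log x)⁻¹) atTop (𝓝 0) := by
    simpa only [mul_zero, Pi.inv_apply] using
      tendsto_log_atTop.inv_tendsto_atTop.const_mul (c ^ 2)⁻¹
  have hlim := ((hinv.add_const (1 / c - 1)).const_mul A).add
    (tendsto_rpow_neg_mul_log_mul_log hs)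
  rw [zero_add, add_zero] at hlim
  refine hlim.congr' ?_
  filter_upwards [eventually_gt_atTop 1] with x hx
  have hx0 : 0 < x := by linarith
  have hlogx := log_pos hx
  rw [sub_eq_add_neg 1 s, rpow_add hx0, rpow_one]
  field_simp
  ring

theorem tendsto_sieve_constant :
    Tendsto (fun n : ℕ ↦ exp (4 / n) / (1 - 4 * (1 / n : ℝ)) ^ 2) atTop (𝓝 1) := by
  have hcont : ContinuousAt (fun t : ℝ ↦ exp (4 * t) / (1 - 4 * t) ^ 2) 0 :=
    ContinuousAt.div (by fun_prop) (by fun_prop) (by norm_num)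
  have hlim := hcont.tendsto.comp (tendsto_one_div_atTop_nhds_zero_nat (𝕜 := ℝ))
  simpa [Function.comp_def, div_eq_mul_inv] using hlim

theorem eventually_T'_le_of_half_le {c ε : ℝ} (hc : 1 / 2 ≤ c) (hc1 : c < 1) (hε : 0 < ε) :
    ∀ᶠ x : ℝ in atTop, (T' c x : ℝ) ≤ (1 + ε) * 8 * (1 / c - 1) * x / log x := by
  have hc0 : 0 < c := by linarith
  have hk : 0 < 1 / c - 1 := sub_pos.mpr (one_lt_one_div hc0 hc1)
  obtain ⟨n, hn, hn4⟩ := ((tendsto_sieve_constant.eventually_lt_const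
    (lt_add_of_pos_right 1 hε)).and (eventually_gt_atTop 4)).exists
  set A := 8 * (exp (4 / n) / (1 - 4 * (1 / n : ℝ)) ^ 2) with hA
  have hδ : (0 : ℝ) < 1 / n := by positivity
  have hδ' : (1 : ℝ) / n < 1 / 4 := by gcongr; exact_mod_cast hn4
  have hlim : A * (1 / c - 1) < (1 + ε) * 8 * (1 / c - 1) := by
    rw [mul_comm (1 + ε), hA]
    gcongr
  filter_upwards [eventually_T'_le hc hc1.le hδ hδ' (by lia : 2 ≤ n), eventually_gt_atTop 1,
    (tendsto_main_add_error hc0 (by positivity : 0 < c * (2 * (1 / n)))).eventually_lt_const hlim]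
    with x hT hx hlt
  rw [div_lt_iff₀ (div_pos (by linarith) (log_pos hx))] at hlt
  calc (T' c x : ℝ) ≤ _ := hT
    _ = A * (x * (((c * log x) ^ 2)⁻¹ + (c * log x)⁻¹ - (log x)⁻¹))
        + x ^ (1 - c * (2 * (1 / n))) * (1 + log x) ^ 3 := by
      rw [hA]
      ring
    _ ≤ (1 + ε) * 8 * (1 / c - 1) * x / log x := hlt.le.trans_eq (mul_div_assoc _ _ _).symm

theorem T'_le_primeCounting (c x : ℝ) : T' c x ≤ Nat.primeCounting ⌊x⌋₊ := by
  rw [T', ← Nat.primesLE_card_eq_primeCounting]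
  refine card_le_card fun p hp ↦ ?_
  obtain ⟨hpx, hprime, -⟩ := mem_filter.mp hp
  exact Nat.mem_primesLE.mpr ⟨Nat.lt_succ_iff.mp (mem_range.mp hpx), hprime⟩

theorem eventually_T'_le_of_le_half {c ε : ℝ} (hc0 : 0 < c) (hc : c ≤ 1 / 2) (hε : 0 < ε) :
    ∀ᶠ x : ℝ in atTop, (T' c x : ℝ) ≤ (1 + ε) * 8 * (1 / c - 1) * x / log x := by
  have hk : 1 ≤ 1 / c - 1 := by
    rw [le_sub_iff_add_le, le_div_iff₀ hc0]
    linarith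
  have hlog4 : log 4 ≤ 3 := by linarith [log_le_sub_one_of_pos (show (0 : ℝ) < 4 by norm_num)]
  filter_upwards [Chebyshev.eventually_primeCounting_le one_pos, eventually_gt_atTop 1]
    with x hπ hx
  have hlogx := log_pos hx
  calc (T' c x : ℝ) ≤ Nat.primeCounting ⌊x⌋₊ := mod_cast T'_le_primeCounting c x
    _ ≤ (log 4 + 1) * x / log x := hπ
    _ ≤ (1 + ε) * 8 * (1 / c - 1) * x / log x := by
      gcongr
      nlinarith

theorem T'_upper_bound_general (c : ℝ) (hc0 : 0 < c) (hc1 : c < 1) :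
    ∀ ε > (0 : ℝ), ∃ x₀ : ℝ, ∀ x ≥ x₀,
      (T' c x : ℝ) ≤ (1 + ε) * 8 * (1 / c - 1) * x / Real.log x := by
  intro ε hε
  rw [← eventually_atTop]
  rcases le_total (1 / 2) c with hc | hc
  · exact eventually_T'_le_of_half_le hc hc1 hε
  · exact eventually_T'_le_of_le_half hc0 hc hε

end Asymptotics

/-- For `8/9 ≤ c < 1`, `T'_c(x) ≤ (1+o(1))·8·(1/c − 1)·x/log x`. -/
theorem T'_upper_bound (c : ℝ) (hc1 : 8 / 9 ≤ c) (hc2 : c < 1) :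
    ∀ ε > (0 : ℝ), ∃ x₀ : ℝ, ∀ x ≥ x₀,
      (T' c x : ℝ) ≤ (1 + ε) * 8 * (1 / c - 1) * x / Real.log x :=
  T'_upper_bound_general c (by linarith) hc2
end
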